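/- arXiv:2006.13102 — 3 statements merged into one kernel-verified Lean document; each statement's English description precedes it below -/
import Mathlib

section
/- Let f ∈ 𝒮(S^m) be a symmetric m-tensor field on ℝⁿ with Schwartz components and let 0 ≤ r ≤ m. Then for every choice of fixed indices 1 ≤ i₁,…,i_r ≤ n the following identity holds on ℝⁿ×(ℝⁿ∖{0}): (J^0 f_{m−r})_{i₁…i_r} = ((m−r)!/m!) σ(i₁,…,i_r) Σ_{p=0}^r (−1)^p C(r,p) ∂^r(J^p f) / (∂x^{i₁}⋯∂x^{i_p} ∂ξ^{i_{p+1}}⋯∂ξ^{i_r}). -/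
noncomputable section

open MeasureTheory Filter
open scoped RealInnerProductSpace BigOperators

/-- `ℝⁿ` with the Euclidean structure. -/
abbrev En (n : ℕ) := EuclideanSpace ℝ (Fin n)

/-- A symmetric `m`-tensor on `ℝⁿ` (pointwise): a family of reals indexed by
`(i₁,…,i_m)`, invariant under permutations of the indices. -/
def IsSymTensor {n m : ℕ} (F : (Fin m → Fin n) → ℝ) : Prop :=
  ∀ (π : Equiv.Perm (Fin m)) (i : Fin m → Fin n), F (i ∘ π) = F i

/-- A symmetric `m`-tensor field on `ℝⁿ`. -/
def IsSymField {n m : ℕ} (f : (Fin m → Fin n) → En n → ℝ) : Prop :=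
  ∀ (π : Equiv.Perm (Fin m)) (i : Fin m → Fin n), f (i ∘ π) = f i

/-- All components of the field are Schwartz functions. -/
def IsSchwartzField {n m : ℕ} (f : (Fin m → Fin n) → En n → ℝ) : Prop :=
  ∀ i, ∃ φ : SchwartzMap (En n) ℝ, ⇑φ = f i

/-- Symmetrization `σ` of a tensor: average over all permutations of the indices. -/
def symz {n m : ℕ} {α : Type*} [AddCommMonoid α] [Module ℝ α]
    (F : (Fin m → Fin n) → α) : (Fin m → Fin n) → α :=
  fun i => ((m.factorial : ℝ))⁻¹ • ∑ π : Equiv.Perm (Fin m), F (i ∘ π)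

/-- The `q`-th momentum ray transform
`(J^q f)(x,ξ) = ∫ t^q f_{i₁…i_m}(x+tξ) ξ^{i₁}⋯ξ^{i_m} dt`, as a function on all of
`ℝⁿ × ℝⁿ`; its restriction to `TSⁿ⁻¹ = {|ξ|=1, ⟨x,ξ⟩=0}` is `I^q f`. -/
def momRT {n m : ℕ} (q : ℕ) (f : (Fin m → Fin n) → En n → ℝ) (x ξ : En n) : ℝ :=
  ∫ t : ℝ, t ^ q * ∑ i : Fin m → Fin n, f i (x + t • ξ) * ∏ r, ξ (i r)

/-- Coordinate partial derivative `∂/∂x^j`. -/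
def pd {n : ℕ} (j : Fin n) (u : En n → ℝ) : En n → ℝ :=
  fun x => fderiv ℝ u x (EuclideanSpace.single j 1)

/-- Inner differentiation (symmetrized derivative) `d`. -/
def dsym {n m : ℕ} (u : (Fin m → Fin n) → En n → ℝ) :
    (Fin (m + 1) → Fin n) → En n → ℝ :=
  symz (fun i => pd (i (Fin.last m)) (u (fun s => i s.castSucc)))

/-- Iterated inner differentiation `d^k`. -/
def dpow {n m : ℕ} : (k : ℕ) → ((Fin m → Fin n) → En n → ℝ) →
    (Fin (m + k) → Fin n) → En n → ℝ
  | 0, u => u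
  | k + 1, u => dsym (dpow k u)

/-- Divergence `δ`. -/
def divg {n m : ℕ} (u : (Fin (m + 1) → Fin n) → En n → ℝ) :
    (Fin m → Fin n) → En n → ℝ :=
  fun i x => ∑ j : Fin n, pd j (u (Fin.snoc i j)) x

/-- Iterated divergence `δ^k`. -/
def divpow {n : ℕ} : (k : ℕ) → {p : ℕ} → ((Fin (p + k) → Fin n) → En n → ℝ) →
    (Fin p → Fin n) → En n → ℝ
  | 0, _, u => u
  | k + 1, _, u => divpow k (divg u)

/-- Partial derivative `∂/∂x^j` in the first slot of a function of `(x, ξ)`. -/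
def pdx {n : ℕ} (j : Fin n) (F : En n → En n → ℝ) : En n → En n → ℝ :=
  fun x ξ => fderiv ℝ (fun x' => F x' ξ) x (EuclideanSpace.single j 1)

/-- Partial derivative `∂/∂ξ^j` in the second slot of a function of `(x, ξ)`. -/
def pdxi {n : ℕ} (j : Fin n) (F : En n → En n → ℝ) : En n → En n → ℝ :=
  fun x ξ => fderiv ℝ (fun ξ' => F x ξ') ξ (EuclideanSpace.single j 1)

/-- Iterated `∂x` derivatives along a list of indices. -/
def pdxList {n : ℕ} (l : List (Fin n)) (F : En n → En n → ℝ) : En n → En n → ℝ :=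
  l.foldr pdx F

/-- Iterated `∂ξ` derivatives along a list of indices. -/
def pdxiList {n : ℕ} (l : List (Fin n)) (F : En n → En n → ℝ) : En n → En n → ℝ :=
  l.foldr pdxi F

/-- The John operator `J_{ij} = ∂²/∂x^i∂ξ^j − ∂²/∂x^j∂ξ^i`. -/
def johnOp {n : ℕ} (i j : Fin n) (F : En n → En n → ℝ) : En n → En n → ℝ :=
  fun x ξ => pdx i (pdxi j F) x ξ - pdx j (pdxi i F) x ξ

/-- Iterated John operators `J_{i₁j₁} ⋯ J_{i_r j_r}`. -/
def johnIter {n : ℕ} (l : List (Fin n × Fin n)) (F : En n → En n → ℝ) : En n → En n → ℝ :=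
  l.foldr (fun ij G => johnOp ij.1 ij.2 G) F

/-- Sharafutdinov's Schwartz space `𝒮(TSⁿ⁻¹)`: a function on
`TSⁿ⁻¹ = {(x,ξ) : |ξ|=1, ⟨x,ξ⟩=0}` is Schwartz iff it is the restriction of a
Schwartz function on `ℝⁿ × ℝⁿ`. -/
def IsSchwartzOnTS {n : ℕ} (φ : En n → En n → ℝ) : Prop :=
  ∃ Φ : SchwartzMap (En n × En n) ℝ, ∀ x ξ : En n, ‖ξ‖ = 1 → ⟪x, ξ⟫ = 0 → φ x ξ = Φ (x, ξ)

/-- Symmetric multiplication `i_{x^{⊗k}} : S^m → S^{m+k}`. -/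
def iPowTens {n m k : ℕ} (x : En n) (V : (Fin m → Fin n) → ℝ) :
    (Fin (m + k) → Fin n) → ℝ :=
  symz (fun i => (∏ r : Fin k, x (i (Fin.natAdd m r))) * V (fun s => i (Fin.castAdd k s)))

/-- Convolution (contraction) `j_{x^{⊗k}} : S^{m+k} → S^m`. -/
def jPowTens {n m k : ℕ} (x : En n) (F : (Fin (m + k) → Fin n) → ℝ) :
    (Fin m → Fin n) → ℝ :=
  fun i => ∑ j : Fin k → Fin n, (∏ r, x (j r)) * F (Fin.append i j)

/-!
Let `f` be a symmetric tensor field of rank `m`, and write `f_j` for the field obtained by fixing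
one of its indices to be `j`. Differentiating `J^q f` under the integral, `∂/∂ξ^j` acts either on
the argument `x + tξ` of `f`, where it is `t ∂/∂x^j`, or on the monomial `ξ^{i₁}⋯ξ^{i_m}`. Hence
`∂(J^q f)/∂ξ^j - ∂(J^{q+1} f)/∂x^j = m J^q f_j` for `ξ ≠ 0`.

In terms of the shift `S` of the sequence `q ↦ J^q f`, the operator `∂/∂ξ^j - S ∂/∂x^j` sends the
sequence of `f` to `m` times that of `f_j`. All the operators `∂/∂ξ^i`, `∂/∂x^j`, `S` commute, so
the symmetrized binomial sum is the expansion of `∏_s (∂/∂ξ^{i_s} - S ∂/∂x^{i_s})`, which fixes the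
indices `i₁, …, i_r` one after the other and yields the factor `m! / (m - r)!`.
-/

section RayIntegral

open SchwartzMap
open scoped ContDiff

universe u

variable {E F : Type*} [NormedAddCommGroup E] [NormedSpace ℝ E]
  [NormedAddCommGroup F] [NormedSpace ℝ F]

/-- The open set of pairs (base point, direction) with nonzero direction, on which the ray
integrals converge. -/
def rays (E : Type*) [NormedAddCommGroup E] : TopologicalSpace.Opens (E × E) :=
  ⟨{z | z.2 ≠ 0}, isOpen_ne.preimage continuous_snd⟩

/-- The moment `∫ t ^ q g(x + tξ) dt` of `g` along the ray `z = (x, ξ)`. -/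
def rayMoment (q : ℕ) (g : 𝓢(E, F)) (z : E × E) : F :=
  ∫ t : ℝ, t ^ q • g (z.1 + t • z.2)

lemma eventually_one_add_abs_le_mul_norm_ray {z₀ : E × E} (hz₀ : z₀ ∈ rays E) :
    ∃ K : ℝ, ∀ᶠ z in nhds z₀, ∀ t : ℝ, 1 + |t| ≤ K * (1 + ‖z.1 + t • z.2‖) := by
  obtain ⟨c, hc, hcz₀⟩ := exists_between (norm_pos_iff.mpr hz₀)
  set b := ‖z₀.1‖ + 1
  have hb : 0 < b := by positivity
  have h_base : ∀ᶠ z : E × E in nhds z₀, ‖z.1‖ < b :=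
    continuous_fst.norm.continuousAt.eventually_lt_const (lt_add_one _)
  have h_dir : ∀ᶠ z : E × E in nhds z₀, c < ‖z.2‖ :=
    continuous_snd.norm.continuousAt.eventually_const_lt hcz₀
  refine ⟨1 + (1 + b) / c, ?_⟩
  filter_upwards [h_base, h_dir] with z hzb hzc t
  set y := ‖z.1 + t • z.2‖
  have hy : 0 ≤ y := norm_nonneg _
  have h_abs_le : |t| ≤ (y + b) / c := by
    rw [le_div_iff₀ hc]
    calc |t| * c ≤ |t| * ‖z.2‖ := by gcongr
      _ = ‖(z.1 + t • z.2) - z.1‖ := by rw [add_sub_cancel_left, norm_smul, Real.norm_eq_abs]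
      _ ≤ y + ‖z.1‖ := norm_sub_le _ _
      _ ≤ y + b := by gcongr
  have h_div_le : (y + b) / c ≤ (1 + b) / c * (1 + y) := by
    rw [div_mul_eq_mul_div]
    gcongr
    nlinarith [mul_nonneg hb.le hy]
  linarith

lemma eventually_schwartz_ray_decay (g : 𝓢(E, F)) (k : ℕ) {z₀ : E × E} (hz₀ : z₀ ∈ rays E) :
    ∃ C : ℝ, ∀ᶠ z in nhds z₀, ∀ t : ℝ,
      (1 + |t|) ^ k * ‖g (z.1 + t • z.2)‖ ≤ C * (1 + t ^ 2)⁻¹ := by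
  obtain ⟨K, hK⟩ := eventually_one_add_abs_le_mul_norm_ray hz₀
  set C := 2 ^ (k + 2) * (Finset.Iic (k + 2, 0)).sup
    (fun m => SchwartzMap.seminorm ℝ m.1 m.2) g
  have h_decay (y : E) : (1 + ‖y‖) ^ (k + 2) * ‖g y‖ ≤ C := by
    simpa only [norm_iteratedFDeriv_zero] using
      SchwartzMap.one_add_le_sup_seminorm_apply (𝕜 := ℝ) (m := (k + 2, 0)) le_rfl le_rfl g y
  refine ⟨K ^ (k + 2) * C, hK.mono fun z hz t => ?_⟩
  have hKpow : 0 ≤ K ^ (k + 2) :=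
    pow_nonneg (pos_of_mul_pos_left ((by positivity : 0 < 1 + |(0 : ℝ)|).trans_le (hz 0))
      (by positivity)).le _
  rw [← div_eq_mul_inv, le_div_iff₀ (by positivity)]
  calc (1 + |t|) ^ k * ‖g (z.1 + t • z.2)‖ * (1 + t ^ 2)
      ≤ (1 + |t|) ^ k * ‖g (z.1 + t • z.2)‖ * (1 + |t|) ^ 2 := by
        gcongr
        nlinarith [abs_nonneg t, sq_abs t]
    _ = (1 + |t|) ^ (k + 2) * ‖g (z.1 + t • z.2)‖ := by ring
    _ ≤ (K * (1 + ‖z.1 + t • z.2‖)) ^ (k + 2) * ‖g (z.1 + t • z.2)‖ := by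
        gcongr
        exact hz t
    _ = K ^ (k + 2) * ((1 + ‖z.1 + t • z.2‖) ^ (k + 2) * ‖g (z.1 + t • z.2)‖) := by
        rw [mul_pow, mul_assoc]
    _ ≤ K ^ (k + 2) * C := by gcongr; exact h_decay _

lemma continuous_rayMoment_integrand (q : ℕ) (g : 𝓢(E, F)) (z : E × E) :
    Continuous fun t : ℝ => t ^ q • g (z.1 + t • z.2) := by
  have := g.continuous
  fun_prop

lemma integrable_rayMoment_integrand (q : ℕ) (g : 𝓢(E, F)) {z : E × E} (hz : z ∈ rays E) :
    Integrable fun t : ℝ => t ^ q • g (z.1 + t • z.2) := by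
  obtain ⟨C, hC⟩ := eventually_schwartz_ray_decay g q hz
  refine (integrable_inv_one_add_sq.const_mul C).mono'
    (continuous_rayMoment_integrand q g z).aestronglyMeasurable (.of_forall fun t => ?_)
  calc ‖t ^ q • g (z.1 + t • z.2)‖ = |t| ^ q * ‖g (z.1 + t • z.2)‖ := by
        rw [norm_smul, norm_pow, Real.norm_eq_abs]
    _ ≤ (1 + |t|) ^ q * ‖g (z.1 + t • z.2)‖ := by gcongr; linarith
    _ ≤ C * (1 + t ^ 2)⁻¹ := hC.self_of_nhds t

/-- The derivative in `z` of the integrand `t ^ q g(x + tξ)` of `rayMoment`. -/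
def rayMomentIntegrandDeriv (q : ℕ) (g : 𝓢(E, F)) (z : E × E) (t : ℝ) : E × E →L[ℝ] F :=
  (t ^ q • fderivCLM ℝ E F g (z.1 + t • z.2)) ∘L .fst ℝ E E +
    (t ^ (q + 1) • fderivCLM ℝ E F g (z.1 + t • z.2)) ∘L .snd ℝ E E

lemma hasFDerivAt_rayMoment_integrand (q : ℕ) (g : 𝓢(E, F)) (z : E × E) (t : ℝ) :
    HasFDerivAt (fun z : E × E => t ^ q • g (z.1 + t • z.2))
      (rayMomentIntegrandDeriv q g z t) z := by
  have h_ray : HasFDerivAt (fun z : E × E => z.1 + t • z.2)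
      (ContinuousLinearMap.fst ℝ E E + t • ContinuousLinearMap.snd ℝ E E) z :=
    hasFDerivAt_fst.add (hasFDerivAt_snd.const_smul t)
  refine ((g.differentiableAt.hasFDerivAt.comp z h_ray).const_smul (t ^ q)).congr_fderiv ?_
  ext v <;> simp [rayMomentIntegrandDeriv, pow_succ, mul_smul]

lemma norm_rayMomentIntegrandDeriv_le (q : ℕ) (g : 𝓢(E, F)) (z : E × E) (t : ℝ) :
    ‖rayMomentIntegrandDeriv q g z t‖ ≤
      2 * ((1 + |t|) ^ (q + 1) * ‖fderivCLM ℝ E F g (z.1 + t • z.2)‖) := by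
  set A := fderivCLM ℝ E F g (z.1 + t • z.2)
  have h_comp {k : ℕ} (hk : k ≤ q + 1) {P : E × E →L[ℝ] E} (hP : ‖P‖ ≤ 1) :
      ‖(t ^ k • A) ∘L P‖ ≤ (1 + |t|) ^ (q + 1) * ‖A‖ :=
    calc ‖(t ^ k • A) ∘L P‖ ≤ ‖t ^ k • A‖ * ‖P‖ := ContinuousLinearMap.opNorm_comp_le _ _
      _ ≤ ‖t ^ k • A‖ := mul_le_of_le_one_right (norm_nonneg _) hP
      _ = |t| ^ k * ‖A‖ := by rw [norm_smul, norm_pow, Real.norm_eq_abs]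
      _ ≤ (1 + |t|) ^ k * ‖A‖ := by gcongr; linarith
      _ ≤ (1 + |t|) ^ (q + 1) * ‖A‖ := by gcongr; linarith [abs_nonneg t]
  rw [two_mul]
  exact norm_add_le_of_le (h_comp q.le_succ (ContinuousLinearMap.norm_fst_le ℝ E E))
    (h_comp le_rfl (ContinuousLinearMap.norm_snd_le ℝ E E))

lemma integral_rayMomentIntegrandDeriv [CompleteSpace F] (q : ℕ) (g : 𝓢(E, F)) {z : E × E}
    (hz : z ∈ rays E) :
    ∫ t, rayMomentIntegrandDeriv q g z t =
      rayMoment q (fderivCLM ℝ E F g) z ∘L .fst ℝ E E +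
        rayMoment (q + 1) (fderivCLM ℝ E F g) z ∘L .snd ℝ E E := by
  have h_int (k : ℕ) := integrable_rayMoment_integrand k (fderivCLM ℝ E F g) hz
  have h_comp (k : ℕ) (P : E × E →L[ℝ] E) :=
    (ContinuousLinearMap.precomp F P).integral_comp_comm (h_int k)
  exact (integral_add ((ContinuousLinearMap.precomp F (.fst ℝ E E)).integrable_comp (h_int q))
    ((ContinuousLinearMap.precomp F (.snd ℝ E E)).integrable_comp (h_int (q + 1)))).trans
      (congrArg₂ (· + ·) (h_comp q (.fst ℝ E E)) (h_comp (q + 1) (.snd ℝ E E)))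

lemma hasFDerivAt_rayMoment [CompleteSpace F] (q : ℕ) (g : 𝓢(E, F)) {z : E × E}
    (hz : z ∈ rays E) :
    HasFDerivAt (rayMoment q g)
      (rayMoment q (fderivCLM ℝ E F g) z ∘L .fst ℝ E E +
        rayMoment (q + 1) (fderivCLM ℝ E F g) z ∘L .snd ℝ E E) z := by
  obtain ⟨C, hC⟩ :=
    eventually_schwartz_ray_decay (fderivCLM ℝ E F g) (q + 1) hz
  have h_meas : AEStronglyMeasurable (rayMomentIntegrandDeriv q g z) :=
    Continuous.aestronglyMeasurable <|
      ((continuous_rayMoment_integrand q _ z).clm_comp continuous_const).add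
        ((continuous_rayMoment_integrand (q + 1) _ z).clm_comp continuous_const)
  rw [← integral_rayMomentIntegrandDeriv q g hz]
  refine hasFDerivAt_integral_of_dominated_of_fderiv_le hC
    (.of_forall fun w => (continuous_rayMoment_integrand q g w).aestronglyMeasurable)
    (integrable_rayMoment_integrand q g hz) h_meas (.of_forall fun t w hw => ?_)
    ((integrable_inv_one_add_sq.const_mul C).const_mul 2)
    (.of_forall fun t w _ => hasFDerivAt_rayMoment_integrand q g w t)
  exact (norm_rayMomentIntegrandDeriv_le q g w t).trans
    (mul_le_mul_of_nonneg_left (hw t) zero_le_two)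

lemma contDiffOn_rayMoment {E F : Type u} [NormedAddCommGroup E] [NormedSpace ℝ E]
    [NormedAddCommGroup F] [NormedSpace ℝ F] [CompleteSpace F] (q : ℕ) (g : 𝓢(E, F)) :
    ContDiffOn ℝ ∞ (rayMoment q g) (rays E) := by
  refine contDiffOn_infty.mpr fun k => ?_
  induction k generalizing F q with
  | zero =>
    exact contDiffOn_zero.mpr fun z hz =>
      (hasFDerivAt_rayMoment q g hz).continuousAt.continuousWithinAt
  | succ k ih =>
    rw [Nat.cast_succ,
      contDiffOn_succ_iff_hasFDerivWithinAt_of_uniqueDiffOn (rays E).isOpen.uniqueDiffOn]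
    refine ⟨by simp, _, ?_, fun z hz => (hasFDerivAt_rayMoment q g hz).hasFDerivWithinAt⟩
    exact ((ih q _).clm_comp contDiffOn_const).add ((ih (q + 1) _).clm_comp contDiffOn_const)

end RayIntegral

section Combinatorics

open Finset

lemma sum_perm_prod_ite_mem_eq_of_card_eq {ι R : Type*} [Fintype ι] [DecidableEq ι] [CommSemiring R]
    (a b : ι → R) {A B : Finset ι} (hAB : #A = #B) :
    ∑ π : Equiv.Perm ι, ∏ s, (if s ∈ A then a (π s) else b (π s)) =
      ∑ π : Equiv.Perm ι, ∏ s, if s ∈ B then a (π s) else b (π s) := by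
  let σ : Equiv.Perm ι := (Finset.equivOfCardEq hAB).extendSubtype
  have hσ (s : ι) : σ s ∈ B ↔ s ∈ A :=
    ⟨not_imp_not.mp (Equiv.extendSubtype_not_mem _ s), Equiv.extendSubtype_mem _ s⟩
  rw [← Equiv.sum_comp (Equiv.mulRight σ)]
  refine sum_congr rfl fun π _ => ?_
  rw [← Equiv.prod_comp σ fun s => if s ∈ B then a (π s) else b (π s)]
  simp [hσ]

lemma sum_choose_mul_sum_perm_prod_ite_mem {ι R : Type*} [Fintype ι] [DecidableEq ι]
    [CommSemiring R] (a b : ι → R) {A : ℕ → Finset ι} (hA : ∀ p ≤ Fintype.card ι, #(A p) = p) :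
    ∑ p ∈ range (Fintype.card ι + 1), (Fintype.card ι).choose p *
        ∑ π : Equiv.Perm ι, ∏ s, (if s ∈ A p then a (π s) else b (π s)) =
      (Fintype.card ι).factorial * ∏ s, (a s + b s) := by
  have h_expand (π : Equiv.Perm ι) :
      ∑ B ∈ univ.powerset, ∏ s, (if s ∈ B then a (π s) else b (π s)) = ∏ s, (a s + b s) := by
    rw [← Equiv.prod_comp π, prod_add]
    simp [prod_ite, filter_not]
  calc _ = ∑ B ∈ (univ : Finset ι).powerset,
        ∑ π : Equiv.Perm ι, ∏ s, (if s ∈ A #B then a (π s) else b (π s)) := by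
        rw [sum_powerset_apply_card fun p =>
          ∑ π : Equiv.Perm ι, ∏ s, (if s ∈ A p then a (π s) else b (π s))]
        simp
    _ = ∑ B ∈ (univ : Finset ι).powerset,
        ∑ π : Equiv.Perm ι, ∏ s, (if s ∈ B then a (π s) else b (π s)) :=
        sum_congr rfl fun B _ => sum_perm_prod_ite_mem_eq_of_card_eq a b (hA _ (card_le_univ B))
    _ = (Fintype.card ι).factorial * ∏ s, (a s + b s) := by
        rw [sum_comm, sum_congr rfl fun π _ => h_expand π]
        simp [Fintype.card_perm]

lemma prod_map_take_mul_prod_map_drop_finRange {R : Type*} [CommMonoid R] {r : ℕ}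
    (p : ℕ) (a b : Fin r → R) :
    (((List.finRange r).take p).map a).prod * (((List.finRange r).drop p).map b).prod =
      ∏ s : Fin r, if (s : ℕ) < p then a s else b s := by
  rw [← List.prod_ofFn, List.ofFn_eq_map]
  conv_rhs => rw [← List.take_append_drop p (List.finRange r), List.map_append, List.prod_append]
  congr 2 <;> refine List.map_congr_left fun s hs => ?_
  · obtain ⟨i, hi, rfl⟩ := List.mem_take_iff_getElem.mp hs
    simp at hi ⊢
    omega
  · obtain ⟨i, hi, rfl⟩ := List.mem_drop_iff_getElem.mp hs
    simp

lemma sum_perm_sum_choose_mul_prod_take_mul_prod_drop {R : Type*} [CommSemiring R] {r : ℕ}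
    (a b : Fin r → R) :
    ∑ π : Equiv.Perm (Fin r), ∑ p ∈ range (r + 1), (r.choose p : R) *
        ((((List.finRange r).take p).map fun s => a (π s)).prod *
          (((List.finRange r).drop p).map fun s => b (π s)).prod) =
      r.factorial * ∏ s, (a s + b s) := by
  have h_card (p : ℕ) (hp : p ≤ Fintype.card (Fin r)) : #{s : Fin r | (s : ℕ) < p} = p := by
    rw [Fin.card_filter_val_lt, min_eq_right (hp.trans_eq (Fintype.card_fin r))]
  have h := sum_choose_mul_sum_perm_prod_ite_mem a b h_card
  simp only [Fintype.card_fin, mem_filter_univ] at h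
  simp only [prod_map_take_mul_prod_map_drop_finRange]
  rw [sum_comm, ← h]
  simp only [mul_sum]

lemma sum_perm_sum_neg_one_pow_choose_mul_prod_take_mul_prod_drop {R : Type*} [CommRing R]
    {r : ℕ} (a b : Fin r → R) (t : R) :
    ∑ π : Equiv.Perm (Fin r), ∑ p ∈ range (r + 1), ((-1) ^ p * r.choose p : ℤ) •
        ((((List.finRange r).take p).map fun s => a (π s)).prod *
          (((List.finRange r).drop p).map fun s => b (π s)).prod * t ^ p) =
      r.factorial • ∏ s, (b s - a s * t) := by
  have h := sum_perm_sum_choose_mul_prod_take_mul_prod_drop (fun s => -t * a s) b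
  calc _ = ∑ π : Equiv.Perm (Fin r), ∑ p ∈ range (r + 1), (r.choose p : R) *
        ((((List.finRange r).take p).map fun s => -t * a (π s)).prod *
          (((List.finRange r).drop p).map fun s => b (π s)).prod) := by
        refine sum_congr rfl fun π _ => sum_congr rfl fun p hp => ?_
        rw [List.prod_map_mul, List.map_const', List.prod_replicate, List.length_take,
          List.length_finRange, min_eq_left (mem_range_succ_iff.mp hp), neg_pow, zsmul_eq_mul]
        push_cast
        ring
    _ = r.factorial • ∏ s, (b s - a s * t) := by
        rw [h, nsmul_eq_mul]
        refine congrArg _ (prod_congr rfl fun s _ => ?_)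
        ring

open scoped IsMulCommutative in
lemma sum_perm_sum_neg_one_pow_choose_mul_prod_take_mul_prod_drop_of_commute {A ι : Type*}
    [Ring A] {x y : ι → A} {t : A}
    (hxx : ∀ i j, Commute (x i) (x j)) (hyy : ∀ i j, Commute (y i) (y j))
    (hxy : ∀ i j, Commute (x i) (y j)) (hxt : ∀ i, Commute (x i) t) (hyt : ∀ i, Commute (y i) t)
    {r : ℕ} (idx : Fin r → ι) :
    ∑ π : Equiv.Perm (Fin r), ∑ p ∈ range (r + 1), ((-1) ^ p * r.choose p : ℤ) •
        ((((List.finRange r).take p).map fun s => x (idx (π s))).prod *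
          (((List.finRange r).drop p).map fun s => y (idx (π s))).prod * t ^ p) =
      r.factorial • ((List.finRange r).map fun s => y (idx s) - x (idx s) * t).prod := by
  -- The identity holds in the commutative subring generated by all the operators involved.
  let S : Set A := Set.range x ∪ Set.range y ∪ {t}
  have hS : ∀ a ∈ S, ∀ b ∈ S, a * b = b * a := by
    rintro _ ((⟨i, rfl⟩ | ⟨i, rfl⟩) | rfl) _ ((⟨j, rfl⟩ | ⟨j, rfl⟩) | rfl)
    exacts [hxx i j, hxy i j, hxt i, (hxy j i).symm, hyy i j, hyt i, (hxt j).symm, (hyt j).symm,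
      rfl]
  have := Algebra.isMulCommutative_adjoin ℤ hS
  let x' (i : ι) : Algebra.adjoin ℤ S := ⟨x i, Algebra.subset_adjoin (by simp [S])⟩
  let y' (i : ι) : Algebra.adjoin ℤ S := ⟨y i, Algebra.subset_adjoin (by simp [S])⟩
  let t' : Algebra.adjoin ℤ S := ⟨t, Algebra.subset_adjoin (by simp [S])⟩
  have h := congrArg (Algebra.adjoin ℤ S).val <|
    sum_perm_sum_neg_one_pow_choose_mul_prod_take_mul_prod_drop
      (fun s => x' (idx s)) (fun s => y' (idx s)) t'
  rw [← List.prod_ofFn, List.ofFn_eq_map] at h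
  simp only [map_sum, map_mul, map_pow, map_zsmul, map_nsmul, map_list_prod, List.map_map] at h
  exact h

end Combinatorics

section SmoothFunctions

open Function TopologicalSpace
open scoped ContDiff

variable {E F : Type*} [NormedAddCommGroup E] [NormedSpace ℝ E]
  [NormedAddCommGroup F] [NormedSpace ℝ F] {U : Opens E}

/-- The space of smooth functions on an open set `U`. Each of them is represented by its extension
by zero to the whole space, so that equality in `smoothOn U F` is equality on `U`. -/
def smoothOn (U : Opens E) (F : Type*) [NormedAddCommGroup F] [NormedSpace ℝ F] :
    Submodule ℝ (E → F) where
  carrier := {u | ContDiffOn ℝ ∞ u U ∧ support u ⊆ U}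
  add_mem' hu hv := ⟨hu.1.add hv.1, (support_add _ _).trans (Set.union_subset hu.2 hv.2)⟩
  zero_mem' := ⟨contDiffOn_const, by simp⟩
  smul_mem' c _ hu := ⟨hu.1.const_smul c, (support_const_smul_subset c _).trans hu.2⟩

namespace smoothOn

/-- The element of `smoothOn U F` given by a function that is smooth on `U`, whatever its values
off `U`. -/
def ofContDiffOn {u : E → F} (hu : ContDiffOn ℝ ∞ u U) : smoothOn U F :=
  ⟨(U : Set E).indicator u, hu.congr fun _ hz => Set.indicator_of_mem hz u,
    Set.support_indicator_subset⟩

lemma ofContDiffOn_eqOn {u : E → F} (hu : ContDiffOn ℝ ∞ u U) :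
    Set.EqOn (ofContDiffOn hu).1 u U :=
  Set.eqOn_indicator

lemma ext_of_eqOn {u v : smoothOn U F} (h : Set.EqOn u.1 v.1 U) : u = v := by
  refine Subtype.ext (funext fun z => ?_)
  by_cases hz : z ∈ U
  · exact h hz
  · rw [notMem_support.mp fun hz' => hz (u.2.2 hz'), notMem_support.mp fun hz' => hz (v.2.2 hz')]

lemma contDiffAt (u : smoothOn U F) {z : E} (hz : z ∈ U) : ContDiffAt ℝ ∞ u.1 z :=
  u.2.1.contDiffAt (U.isOpen.mem_nhds hz)

lemma differentiableAt (u : smoothOn U F) {z : E} (hz : z ∈ U) : DifferentiableAt ℝ u.1 z :=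
  (contDiffAt u hz).differentiableAt (by simp)

lemma contDiffOn_fderiv (u : smoothOn U F) : ContDiffOn ℝ ∞ (fderiv ℝ u.1) U :=
  ((contDiffOn_infty_iff_fderiv_of_isOpen U.isOpen).mp u.2.1).2

lemma contDiffOn_fderiv_apply (v : E) (u : smoothOn U F) :
    ContDiffOn ℝ ∞ (fun z => fderiv ℝ u.1 z v) U :=
  (contDiffOn_fderiv u).clm_apply contDiffOn_const

/-- Differentiation in the direction `v`, as an operator on the smooth functions on `U`. -/
def dirDeriv (v : E) : Module.End ℝ (smoothOn U F) where
  toFun u := ofContDiffOn (contDiffOn_fderiv_apply v u)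
  map_add' u w := ext_of_eqOn fun z hz => by
    simp only [Submodule.coe_add, Pi.add_apply, ofContDiffOn_eqOn _ hz]
    rw [fderiv_add (differentiableAt u hz) (differentiableAt w hz), add_apply]
  map_smul' c u := ext_of_eqOn fun z hz => by
    simp only [SetLike.val_smul, Pi.smul_apply, ofContDiffOn_eqOn _ hz, RingHom.id_apply]
    rw [fderiv_const_smul (differentiableAt u hz), smul_apply]

lemma dirDeriv_apply (v : E) (u : smoothOn U F) {z : E} (hz : z ∈ U) :
    (dirDeriv v u).1 z = fderiv ℝ u.1 z v :=
  ofContDiffOn_eqOn (contDiffOn_fderiv_apply v u) hz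

lemma dirDeriv_apply_of_eqOn (v : E) (u : smoothOn U F) {w : E → F} (h : Set.EqOn w u.1 U)
    {z : E} (hz : z ∈ U) : (dirDeriv v u).1 z = fderiv ℝ w z v := by
  rw [dirDeriv_apply v u hz, (h.eventuallyEq_of_mem (U.isOpen.mem_nhds hz)).fderiv_eq]

lemma dirDeriv_dirDeriv_apply (v w : E) (u : smoothOn U F) {z : E} (hz : z ∈ U) :
    (dirDeriv v (dirDeriv w u)).1 z = fderiv ℝ (fderiv ℝ u.1) z v w := by
  have h_diff : DifferentiableAt ℝ (fderiv ℝ u.1) z :=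
    ((contDiffOn_fderiv u).contDiffAt (U.isOpen.mem_nhds hz)).differentiableAt (by simp)
  rw [dirDeriv_apply_of_eqOn v (dirDeriv w u) (fun _ hz' => (dirDeriv_apply w u hz').symm) hz,
    fderiv_clm_apply h_diff (differentiableAt_const w)]
  simp

lemma commute_dirDeriv (v w : E) : Commute (dirDeriv (U := U) (F := F) v) (dirDeriv w) := by
  refine LinearMap.ext fun u => ext_of_eqOn fun z hz => ?_
  have h_symm : IsSymmSndFDerivAt ℝ u.1 z := by
    refine (contDiffAt u hz).isSymmSndFDerivAt ?_
    rw [minSmoothness_of_isRCLikeNormedField]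
    exact WithTop.coe_le_coe.mpr le_top
  exact (dirDeriv_dirDeriv_apply v w u hz).trans <|
    (h_symm.eq v w).trans (dirDeriv_dirDeriv_apply w v u hz).symm

end smoothOn

end SmoothFunctions

section PartialDerivatives

open Function TopologicalSpace smoothOn

variable {n : ℕ} {U : Opens (En n × En n)} {F : En n → En n → ℝ} {u : smoothOn U ℝ}

lemma eqOn_pdx (hF : Set.EqOn (uncurry F) u.1 U) (j : Fin n) :
    Set.EqOn (uncurry (pdx j F)) (dirDeriv (EuclideanSpace.single j 1, 0) u).1 U := by
  rintro ⟨x, ξ⟩ hz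
  have h_diff : DifferentiableAt ℝ (uncurry F) (x, ξ) :=
    (differentiableAt u hz).congr_of_eventuallyEq
      (hF.eventuallyEq_of_mem (U.isOpen.mem_nhds hz))
  rw [dirDeriv_apply_of_eqOn _ u hF hz]
  exact congrArg (· (EuclideanSpace.single j 1))
    (HasFDerivAt.comp x (f := fun x' => (x', ξ)) h_diff.hasFDerivAt
      (hasFDerivAt_prodMk_left x ξ)).fderiv

lemma eqOn_pdxi (hF : Set.EqOn (uncurry F) u.1 U) (j : Fin n) :
    Set.EqOn (uncurry (pdxi j F)) (dirDeriv (0, EuclideanSpace.single j 1) u).1 U := by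
  rintro ⟨x, ξ⟩ hz
  have h_diff : DifferentiableAt ℝ (uncurry F) (x, ξ) :=
    (differentiableAt u hz).congr_of_eventuallyEq
      (hF.eventuallyEq_of_mem (U.isOpen.mem_nhds hz))
  rw [dirDeriv_apply_of_eqOn _ u hF hz]
  exact congrArg (· (EuclideanSpace.single j 1))
    (HasFDerivAt.comp ξ (f := fun ξ' => (x, ξ')) h_diff.hasFDerivAt
      (hasFDerivAt_prodMk_right x ξ)).fderiv

lemma eqOn_pdxList (hF : Set.EqOn (uncurry F) u.1 U) (l : List (Fin n)) :
    Set.EqOn (uncurry (pdxList l F))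
      ((l.map fun j => dirDeriv (EuclideanSpace.single j 1, 0)).prod u).1 U := by
  induction l with
  | nil => exact hF
  | cons j l ih => exact eqOn_pdx ih j

lemma eqOn_pdxiList (hF : Set.EqOn (uncurry F) u.1 U) (l : List (Fin n)) :
    Set.EqOn (uncurry (pdxiList l F))
      ((l.map fun j => dirDeriv (0, EuclideanSpace.single j 1)).prod u).1 U := by
  induction l with
  | nil => exact hF
  | cons j l ih => exact eqOn_pdxi ih j

end PartialDerivatives

section SymmetricCoefficients

lemma prod_erase_univ_eq_prod_succAbove {M : Type*} [CommMonoid M] {k : ℕ} (s : Fin (k + 1))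
    (a : Fin (k + 1) → M) : ∏ i ∈ Finset.univ.erase s, a i = ∏ i, a (s.succAbove i) := by
  rw [Fin.univ_succAbove k s, Finset.erase_cons, Finset.prod_map]
  rfl

lemma sum_mul_sum_prod_erase_mul_single {ι R : Type*} [Fintype ι] [DecidableEq ι] [CommSemiring R]
    {k : ℕ} {c : (Fin (k + 1) → ι) → R} (hc : ∀ (π : Equiv.Perm (Fin (k + 1))) i, c (i ∘ π) = c i)
    (a : ι → R) (j : ι) :
    ∑ i, c i * ∑ s, (∏ s' ∈ Finset.univ.erase s, a (i s')) * (Pi.single j 1 : ι → R) (i s) =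
      (k + 1) * ∑ i : Fin k → ι, c (Fin.cons j i) * ∏ s, a (i s) := by
  have h_slot (s : Fin (k + 1)) :
      ∑ i, c i * ((∏ s' ∈ Finset.univ.erase s, a (i s')) * (Pi.single j 1 : ι → R) (i s)) =
        ∑ i : Fin k → ι, c (Fin.cons j i) * ∏ s, a (i s) := by
    have h_insert (i : Fin k → ι) : c (s.insertNth j i) = c (Fin.cons j i) := by
      rw [← Fin.cons_comp_cycleRange, hc]
    rw [← Equiv.sum_comp (Fin.insertNthEquiv (fun _ => ι) s), Fintype.sum_prod_type,
      Fintype.sum_eq_single j fun l hl => by simp [Fin.insertNthEquiv, hl]]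
    simp [Fin.insertNthEquiv, prod_erase_univ_eq_prod_succAbove, h_insert]
  simp only [Finset.mul_sum]
  rw [Finset.sum_comm]
  simp only [← Finset.mul_sum, h_slot]
  simp

lemma apply_cons_comp_perm {ι α : Type*} {k : ℕ} {c : (Fin (k + 1) → ι) → α}
    (hc : ∀ (π : Equiv.Perm (Fin (k + 1))) i, c (i ∘ π) = c i) (j : ι) (π : Equiv.Perm (Fin k))
    (i : Fin k → ι) : c (Fin.cons j (i ∘ π)) = c (Fin.cons j i) := by
  rw [← hc (Equiv.Perm.decomposeFin.symm (0, π)) (Fin.cons j i)]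
  refine congrArg c (funext (Fin.cases ?_ fun s => ?_)) <;> simp

end SymmetricCoefficients

section MomentumRayTransform

open SchwartzMap smoothOn
open scoped ContDiff

variable {n m : ℕ}

lemma momRT_eq_sum_rayMoment (q : ℕ) (φ : (Fin m → Fin n) → 𝓢(En n, ℝ)) {z : En n × En n}
    (hz : z ∈ rays (En n)) :
    momRT q (fun i => φ i) z.1 z.2 = ∑ i, rayMoment q (φ i) z * ∏ s, z.2 (i s) := by
  simp only [momRT, Finset.mul_sum, ← mul_assoc]
  rw [integral_finsetSum]
  · exact Finset.sum_congr rfl fun i _ => integral_mul_const _ _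
  · exact fun i _ => (integrable_rayMoment_integrand q (φ i) hz).mul_const _

lemma contDiffOn_momRT (q : ℕ) (φ : (Fin m → Fin n) → 𝓢(En n, ℝ)) :
    ContDiffOn ℝ ∞ (fun z : En n × En n => momRT q (fun i => φ i) z.1 z.2) (rays (En n)) := by
  refine ContDiffOn.congr (.sum fun i _ => (contDiffOn_rayMoment q (φ i)).mul ?_)
    fun z hz => momRT_eq_sum_rayMoment q φ hz
  fun_prop

lemma hasFDerivAt_prod_coord (i : Fin m → Fin n) (z : En n × En n) :
    HasFDerivAt (fun z : En n × En n => ∏ s, z.2 (i s))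
      (∑ s, (∏ s' ∈ Finset.univ.erase s, z.2 (i s')) •
        (EuclideanSpace.proj (i s) ∘L .snd ℝ (En n) (En n))) z :=
  HasFDerivAt.finsetProd fun s _ =>
    ((EuclideanSpace.proj (i s)).hasFDerivAt (𝕜 := ℝ)).comp z hasFDerivAt_snd

lemma fderiv_momRT_apply (q : ℕ) (φ : (Fin m → Fin n) → 𝓢(En n, ℝ)) {z : En n × En n}
    (hz : z ∈ rays (En n)) (v w : En n) :
    fderiv ℝ (fun z : En n × En n => momRT q (fun i => φ i) z.1 z.2) z (v, w) =
      ∑ i, ((rayMoment q (fderivCLM ℝ _ _ (φ i)) z v +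
          rayMoment (q + 1) (fderivCLM ℝ _ _ (φ i)) z w) * ∏ s, z.2 (i s) +
        rayMoment q (φ i) z * ∑ s, (∏ s' ∈ Finset.univ.erase s, z.2 (i s')) * w (i s)) := by
  have h_sum := HasFDerivAt.fun_sum (u := Finset.univ) fun i _ =>
    (hasFDerivAt_rayMoment q (φ i) hz).mul (hasFDerivAt_prod_coord i z)
  have h_eq : (fun z : En n × En n => momRT q (fun i => φ i) z.1 z.2) =ᶠ[nhds z]
      fun z => ∑ i, rayMoment q (φ i) z * ∏ s, z.2 (i s) :=
    Filter.eventually_of_mem ((rays (En n)).isOpen.mem_nhds hz) fun _ => momRT_eq_sum_rayMoment q φ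
  rw [(h_sum.congr_of_eventuallyEq h_eq).fderiv, sum_apply]
  refine Finset.sum_congr rfl fun i _ => ?_
  simp only [add_apply, smul_apply, sum_apply, ContinuousLinearMap.comp_apply,
    ContinuousLinearMap.coe_fst', ContinuousLinearMap.coe_snd', smul_eq_mul, PiLp.proj_apply]
  ring

lemma fderiv_momRT_apply_snd_single (q : ℕ) {φ : (Fin (m + 1) → Fin n) → 𝓢(En n, ℝ)}
    (hφ : ∀ (π : Equiv.Perm (Fin (m + 1))) i, φ (i ∘ π) = φ i) {z : En n × En n}
    (hz : z ∈ rays (En n)) (j : Fin n) :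
    fderiv ℝ (fun z : En n × En n => momRT q (fun i => φ i) z.1 z.2) z
        (0, EuclideanSpace.single j 1) =
      fderiv ℝ (fun z : En n × En n => momRT (q + 1) (fun i => φ i) z.1 z.2) z
          (EuclideanSpace.single j 1, 0) +
        (m + 1) * momRT q (fun i : Fin m → Fin n => φ (Fin.cons j i)) z.1 z.2 := by
  rw [fderiv_momRT_apply q φ hz, fderiv_momRT_apply (q + 1) φ hz, momRT_eq_sum_rayMoment q _ hz,
    ← sum_mul_sum_prod_erase_mul_single (c := fun i => rayMoment q (φ i) z)
      (fun π i => by rw [hφ]) (z.2 ·) j]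
  simp [Finset.sum_add_distrib, Pi.single_apply]

end MomentumRayTransform

section Sequences

variable {R M : Type*} [Semiring R] [AddCommMonoid M] [Module R M]

/-- The shift `(u_q) ↦ (u_{q+1})` on sequences of vectors. -/
def seqShift : Module.End R (ℕ → M) :=
  LinearMap.funLeft R M Nat.succ

lemma seqShift_pow_apply (p q : ℕ) (u : ℕ → M) : (seqShift (R := R) ^ p) u q = u (q + p) := by
  induction p generalizing q with
  | zero => rfl
  | succ p ih =>
    rw [pow_succ']
    exact (ih (q + 1)).trans (congrArg u (Nat.succ_add_eq_add_succ q p))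

lemma commute_compLeft {D D' : Module.End R M} (h : Commute D D') :
    Commute (D.compLeft ℕ) (D'.compLeft ℕ) :=
  LinearMap.ext fun u => funext fun q => LinearMap.congr_fun h (u q)

lemma commute_compLeft_seqShift (D : Module.End R M) : Commute (D.compLeft ℕ) seqShift :=
  rfl

lemma prod_map_compLeft_apply {ι : Type*} (D : ι → Module.End R M) (l : List ι) (u : ℕ → M)
    (q : ℕ) : (l.map fun j => (D j).compLeft ℕ).prod u q = (l.map D).prod (u q) := by
  induction l with
  | nil => rfl
  | cons j l ih => exact congrArg (D j) ih

end Sequences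

section Inversion

open SchwartzMap smoothOn

variable {n m : ℕ}

/-- Sequences of smooth functions of `(x, ξ)` with `ξ ≠ 0`. -/
abbrev RaySeq (n : ℕ) := ℕ → smoothOn (rays (En n)) ℝ

/-- The sequence `q ↦ J^q φ` of momentum ray transforms of a tensor field with Schwartz components,
restricted to `ξ ≠ 0`. -/
def momRTSeq (φ : (Fin m → Fin n) → 𝓢(En n, ℝ)) : RaySeq n := fun q =>
  ofContDiffOn (contDiffOn_momRT q φ)

lemma momRTSeq_eqOn (φ : (Fin m → Fin n) → 𝓢(En n, ℝ)) (q : ℕ) :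
    Set.EqOn (Function.uncurry (momRT q fun i => φ i)) (momRTSeq φ q).1 (rays (En n)) :=
  (ofContDiffOn_eqOn (contDiffOn_momRT q φ)).symm

/-- Termwise `∂/∂x^j`. -/
def seqPdx (j : Fin n) : Module.End ℝ (RaySeq n) :=
  (dirDeriv (EuclideanSpace.single j 1, 0)).compLeft ℕ

/-- Termwise `∂/∂ξ^j`. -/
def seqPdxi (j : Fin n) : Module.End ℝ (RaySeq n) :=
  (dirDeriv (0, EuclideanSpace.single j 1)).compLeft ℕ

lemma commute_seqPdx (i j : Fin n) : Commute (seqPdx i) (seqPdx j) :=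
  commute_compLeft (commute_dirDeriv _ _)

lemma commute_seqPdxi (i j : Fin n) : Commute (seqPdxi i) (seqPdxi j) :=
  commute_compLeft (commute_dirDeriv _ _)

lemma commute_seqPdx_seqPdxi (i j : Fin n) : Commute (seqPdx i) (seqPdxi j) :=
  commute_compLeft (commute_dirDeriv _ _)

lemma commute_seqPdx_seqShift (j : Fin n) : Commute (seqPdx j) seqShift :=
  commute_compLeft_seqShift _

lemma commute_seqPdxi_seqShift (j : Fin n) : Commute (seqPdxi j) seqShift :=
  commute_compLeft_seqShift _

/-- The operator `∂/∂ξ^j - S ∂/∂x^j`, with `S` the shift of sequences. On the momentum ray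
transforms of a symmetric tensor field it fixes one index of the field to be `j`. -/
def fixIndex (j : Fin n) : Module.End ℝ (RaySeq n) :=
  seqPdxi j - seqPdx j * seqShift

lemma commute_fixIndex (i j : Fin n) : Commute (fixIndex i) (fixIndex j) := by
  have h_mixed (i j : Fin n) : Commute (seqPdxi i) (seqPdx j * seqShift) :=
    (commute_seqPdx_seqPdxi j i).symm.mul_right (commute_seqPdxi_seqShift i)
  have h_shift : Commute (seqPdx i * seqShift) (seqPdx j * seqShift) :=
    ((commute_seqPdx i j).mul_right (commute_seqPdx_seqShift i)).mul_left
      ((commute_seqPdx_seqShift j).symm.mul_right (.refl _))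
  unfold fixIndex
  exact (Commute.sub_right (R := Module.End ℝ (RaySeq n)) (commute_seqPdxi i j)
    (h_mixed i j)).sub_left (Commute.sub_right (h_mixed j i).symm h_shift)

lemma fixIndex_momRTSeq {φ : (Fin (m + 1) → Fin n) → 𝓢(En n, ℝ)}
    (hφ : ∀ (π : Equiv.Perm (Fin (m + 1))) i, φ (i ∘ π) = φ i) (j : Fin n) :
    fixIndex j (momRTSeq φ) = ((m + 1 : ℕ) : ℝ) • momRTSeq fun i => φ (Fin.cons j i) := by
  refine funext fun q => ext_of_eqOn fun z hz => ?_
  have h_fderiv (q : ℕ) (v : En n × En n) : (dirDeriv v (momRTSeq φ q)).1 z =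
      fderiv ℝ (fun z : En n × En n => momRT q (fun i => φ i) z.1 z.2) z v :=
    dirDeriv_apply_of_eqOn v _ (momRTSeq_eqOn φ q) hz
  calc (fixIndex j (momRTSeq φ) q).1 z
      = (dirDeriv (0, EuclideanSpace.single j 1) (momRTSeq φ q)).1 z -
          (dirDeriv (EuclideanSpace.single j 1, 0) (momRTSeq φ (q + 1))).1 z := rfl
    _ = (m + 1) * momRT q (fun i : Fin m → Fin n => φ (Fin.cons j i)) z.1 z.2 := by
        rw [h_fderiv, h_fderiv, fderiv_momRT_apply_snd_single q hφ hz, add_sub_cancel_left]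
    _ = (m + 1) * (momRTSeq (fun i : Fin m → Fin n => φ (Fin.cons j i)) q).1 z :=
        congrArg _ (momRTSeq_eqOn _ q hz)
    _ = ((((m + 1 : ℕ) : ℝ) • momRTSeq fun i => φ (Fin.cons j i)) q).1 z := by simp

lemma prod_fixIndex_momRTSeq {r p' : ℕ} (h : m = r + p') {φ : (Fin m → Fin n) → 𝓢(En n, ℝ)}
    (hφ : ∀ (π : Equiv.Perm (Fin m)) i, φ (i ∘ π) = φ i) (idx : Fin r → Fin n) :
    ((List.finRange r).map fun s => fixIndex (idx s)).prod (momRTSeq φ) =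
      ((m.factorial : ℝ) / p'.factorial) •
        momRTSeq fun j => φ (Fin.append idx j ∘ Fin.cast h) := by
  induction r generalizing m with
  | zero =>
    obtain rfl : m = p' := h.trans (zero_add p')
    obtain rfl : idx = Fin.elim0 := Subsingleton.elim _ _
    rw [div_self (Nat.cast_ne_zero.mpr m.factorial_ne_zero), one_smul]
    simp only [Fin.elim0_append, Function.comp_assoc]
    rfl
  | succ r ih =>
    obtain rfl : m = (r + p') + 1 := h.trans (Nat.add_right_comm r 1 p')
    have h_comm : Commute (fixIndex (idx 0))
        ((List.finRange r).map fun s => fixIndex (idx s.succ)).prod :=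
      Commute.list_prod_right _ _ <| List.forall_mem_map.mpr fun s _ => commute_fixIndex _ _
    have h_append (j : Fin p' → Fin n) : Fin.cons (idx 0) (Fin.append (idx ∘ Fin.succ) j) =
        Fin.append idx j ∘ Fin.cast h := by
      rw [← Fin.cons_self_tail idx, Fin.append_cons]
      rfl
    rw [List.finRange_succ, List.map_cons, List.prod_cons, List.map_map]
    calc _ = ((List.finRange r).map fun s => fixIndex (idx s.succ)).prod
          (fixIndex (idx 0) (momRTSeq φ)) := LinearMap.congr_fun h_comm.eq _
      _ = (((r + p' + 1 : ℕ) : ℝ) * ((r + p').factorial / p'.factorial)) •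
          momRTSeq fun j => φ (Fin.cons (idx 0) (Fin.append (idx ∘ Fin.succ) j)) := by
        rw [fixIndex_momRTSeq hφ, map_smul, ih rfl (apply_cons_comp_perm hφ (idx 0)), smul_smul]
        rfl
      _ = _ := by
        simp only [h_append, Nat.factorial_succ, Nat.cast_mul, mul_div_assoc]

lemma pdxList_pdxiList_momRT (l l' : List (Fin n)) (p : ℕ) (φ : (Fin m → Fin n) → 𝓢(En n, ℝ))
    {x ξ : En n} (hξ : ξ ≠ 0) :
    pdxList l (pdxiList l' (momRT p fun i => φ i)) x ξ =
      (((l.map seqPdx).prod * (l'.map seqPdxi).prod * seqShift ^ p : Module.End ℝ (RaySeq n))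
        (momRTSeq φ) 0).1 (x, ξ) := by
  have h_eqOn := eqOn_pdxList (eqOn_pdxiList (momRTSeq_eqOn φ p) l') l
  refine (h_eqOn (x := (x, ξ)) hξ).trans ?_
  rw [Module.End.mul_apply, Module.End.mul_apply]
  unfold seqPdx seqPdxi
  rw [prod_map_compLeft_apply, prod_map_compLeft_apply, seqShift_pow_apply, zero_add]

lemma sum_perm_sum_pdxList_pdxiList_momRT {r : ℕ} (φ : (Fin m → Fin n) → 𝓢(En n, ℝ))
    (idx : Fin r → Fin n) {x ξ : En n} (hξ : ξ ≠ 0) :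
    ∑ π : Equiv.Perm (Fin r), ∑ p ∈ Finset.range (r + 1), (-1 : ℝ) ^ p * r.choose p *
        pdxList (((List.finRange r).take p).map fun s => idx (π s))
          (pdxiList (((List.finRange r).drop p).map fun s => idx (π s))
            (momRT p fun i => φ i)) x ξ =
      r.factorial *
        (((List.finRange r).map fun s => fixIndex (idx s)).prod (momRTSeq φ) 0).1 (x, ξ) := by
  let evalAt : Module.End ℝ (RaySeq n) →ₗ[ℝ] ℝ :=
    LinearMap.proj (x, ξ) ∘ₗ (smoothOn (rays (En n)) ℝ).subtype ∘ₗ LinearMap.proj 0 ∘ₗ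
      LinearMap.applyₗ (momRTSeq φ)
  have h := congrArg evalAt <|
    sum_perm_sum_neg_one_pow_choose_mul_prod_take_mul_prod_drop_of_commute
      (A := Module.End ℝ (RaySeq n)) commute_seqPdx
      commute_seqPdxi commute_seqPdx_seqPdxi commute_seqPdx_seqShift commute_seqPdxi_seqShift idx
  simp only [map_sum, map_zsmul, map_nsmul] at h
  simp only [zsmul_eq_mul, nsmul_eq_mul, Int.cast_mul, Int.cast_pow, Int.cast_neg, Int.cast_one,
    Int.cast_natCast] at h
  simp only [pdxList_pdxiList_momRT _ _ _ φ hξ, List.map_map]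
  exact h

end Inversion

/-- recovering `J^0` of the restricted tensor field `f_{m−r}`
(obtained by fixing the first `r` indices of `f` to `idx`) from `J^0f, …, J^rf`:
`(J^0 f_{m−r})_{i₁…i_r} = ((m−r)!/m!) σ(i₁…i_r) Σ_{p=0}^r (−1)^p C(r,p)
∂^r (J^p f)/(∂x^{i₁}⋯∂x^{i_p} ∂ξ^{i_{p+1}}⋯∂ξ^{i_r})`.
The rank is `m = r + p'` and `σ` is the average over permutations of the fixed
indices. -/
theorem momRT_inversion_of_restricted_field
    (n r p' : ℕ)
    (f : (Fin (r + p') → Fin n) → En n → ℝ)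
    (hf : IsSchwartzField f) (hfsym : IsSymField f)
    (idx : Fin r → Fin n) :
    ∀ x ξ : En n, ξ ≠ 0 →
      momRT 0 (fun j : Fin p' → Fin n => f (Fin.append idx j)) x ξ
        = ((p'.factorial : ℝ) / ((r + p').factorial)) * ((r.factorial : ℝ))⁻¹ *
          ∑ π : Equiv.Perm (Fin r), ∑ p ∈ Finset.range (r + 1),
            (-1 : ℝ) ^ p * (r.choose p) *
              pdxList (((List.finRange r).take p).map (fun s => idx (π s)))
                (pdxiList (((List.finRange r).drop p).map (fun s => idx (π s)))
                  (momRT p f)) x ξ := by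
  intro x ξ hξ
  choose φ hφ using hf
  obtain rfl : f = fun i => ⇑(φ i) := funext fun i => (hφ i).symm
  have hφ_symm (π : Equiv.Perm (Fin (r + p'))) (i) : φ (i ∘ π) = φ i :=
    DFunLike.coe_injective (hfsym π i)
  have h_restrict := prod_fixIndex_momRTSeq rfl hφ_symm idx
  rw [sum_perm_sum_pdxList_pdxiList_momRT φ idx hξ, h_restrict]
  calc momRT 0 (fun j => ⇑(φ (Fin.append idx j))) x ξ
      = (momRTSeq (fun j => φ (Fin.append idx j)) 0).1 (x, ξ) :=
        momRTSeq_eqOn (fun j => φ (Fin.append idx j)) 0 (x := (x, ξ)) hξ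
    _ = p'.factorial / (r + p').factorial * (r.factorial : ℝ)⁻¹ * (r.factorial *
          ((r + p').factorial / p'.factorial *
            (momRTSeq (fun j => φ (Fin.append idx j)) 0).1 (x, ξ))) := by
        field_simp
end
end

section
/- Let n ≥ 2, let 0 ≤ k ≤ m−1, and let f ∈ 𝒮(S^m) be a symmetric m-tensor field on ℝⁿ with Schwartz components satisfying δ^{k+1} f = 0 (f is (k+1)-solenoidal). If I^ℓ f = 0 for every ℓ = 0, 1, …, k (i.e. 𝓘^k f = 0), then f ≡ 0. In other words, the operator 𝓘^k is injective on (k+1)-solenoidal Schwartz tensor fields. -/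
noncomputable section

open MeasureTheory Filter
open scoped RealInnerProductSpace BigOperators

/-!
Vanishing of the moments of order `≤ k` along the lines of direction `ξ` makes
`P(z, ξ) = ⟨f̂(z), ξ^{⊗m}⟩` vanish to order `k + 1` on the hyperplane `⟨z, ξ⟩ = 0`: the Fourier
slice theorem handles order one, and differentiating `f̂` in the direction `ξ` trades one order for
one moment. The result is a bound `|P(z, ξ)| ≤ C |⟨z, ξ⟩|^{k+1} ‖ξ‖^p` uniform in `ξ`. On the other
hand `δ^{k+1} f = 0` says that `f̂(z)` contracted with `z^{⊗(k+1)}` is zero, so `s ↦ P(z, w + s z)`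
is a polynomial of degree at most `k`. For `w ⟂ z` it is also `O(s^{k+1})`, hence zero. The vectors
`w + s z` with `w ⟂ z` exhaust `ℝⁿ`, so `f̂(z) = 0` by polarization.
-/

open scoped FourierTransform SchwartzMap LineDeriv

section Fourier

variable {E F : Type*} [NormedAddCommGroup E] [InnerProductSpace ℝ E] [FiniteDimensional ℝ E]
  [MeasurableSpace E] [BorelSpace E] [NormedAddCommGroup F]

open Submodule in
theorem integral_eq_integral_orthogonal_integral_line [NormedSpace ℝ F] {ξ : E} (hξ : ‖ξ‖ = 1)
    {h : E → F} (hh : Integrable h) :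
    ∫ z, h z = ∫ x : (ℝ ∙ ξ)ᗮ, ∫ t : ℝ, h (x + t • ξ) := by
  have add_preserving : MeasurePreserving fun q : (ℝ ∙ ξ) × (ℝ ∙ ξ)ᗮ ↦ (q.1 + q.2 : E) := by
    have := ((ℝ ∙ ξ).measurePreserving_measurableEquivProd (0 : E)).symm
    rw [InnerProductSpace.euclideanHausdorffMeasure_eq_volume] at this
    exact this.congr (by fun_prop) (.of_forall fun q ↦ by simp)
  let toSpan := LinearIsometryEquiv.toSpanUnitSingleton (𝕜 := ℝ) ξ hξ
  calc ∫ z, h z = ∫ q : (ℝ ∙ ξ) × (ℝ ∙ ξ)ᗮ, h (q.1 + q.2) := by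
        rw [← add_preserving.map_eq] at hh ⊢
        exact integral_map add_preserving.aemeasurable hh.aestronglyMeasurable
    _ = ∫ x : (ℝ ∙ ξ)ᗮ, ∫ c : (ℝ ∙ ξ), h (c + x) :=
        integral_prod_symm _ (add_preserving.integrable_comp_of_integrable hh)
    _ = ∫ x : (ℝ ∙ ξ)ᗮ, ∫ t : ℝ, h (x + t • ξ) := by
        congr! 2 with x
        rw [← toSpan.measurePreserving.integral_comp toSpan.toMeasurableEquiv.measurableEmbedding]
        simp [add_comm, toSpan]

variable [NormedSpace ℂ F]

open Submodule in
theorem fourier_eq_zero_of_integral_line_eq_zero {ξ y : E} (hξ : ‖ξ‖ = 1) (hy : ⟪y, ξ⟫ = 0)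
    (φ : 𝓢(E, F)) (hφ : ∀ x, ⟪x, ξ⟫ = 0 → ∫ t : ℝ, φ (x + t • ξ) = 0) : 𝓕 φ y = 0 := by
  rw [SchwartzMap.fourier_coe, Real.fourier_eq,
    integral_eq_integral_orthogonal_integral_line hξ
      ((Real.fourierIntegral_convergent_iff y).2 φ.integrable)]
  refine integral_eq_zero_of_ae (.of_forall fun x ↦ ?_)
  have hx : ⟪(x : E), ξ⟫ = 0 := mem_orthogonal_singleton_iff_inner_left.1 x.2
  have phase_const (t : ℝ) : ⟪(x : E) + t • ξ, y⟫ = ⟪(x : E), y⟫ := by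
    rw [inner_add_left, real_inner_smul_left, real_inner_comm y ξ, hy, mul_zero, add_zero]
  simp only [phase_const, Circle.smul_def, integral_smul, hφ x hx, smul_zero, Pi.zero_apply]

theorem hasDerivAt_fourier_add_smul (φ : 𝓢(E, F)) (y v : E) (u : ℝ) :
    HasDerivAt (fun u : ℝ ↦ 𝓕 φ (y + u • v))
      (-(2 * Real.pi * Complex.I) • 𝓕 (SchwartzMap.smulLeftCLM F (inner ℝ · v) φ) (y + u • v))
      u := by
  have line : HasDerivAt (fun u : ℝ ↦ y + u • v) v u := by
    simpa using ((hasDerivAt_id u).smul_const v).const_add y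
  have fderiv_fourier (w : E) : fderiv ℝ (𝓕 φ : 𝓢(E, F)) w v =
      -(2 * Real.pi * Complex.I) • 𝓕 (SchwartzMap.smulLeftCLM F (inner ℝ · v) φ) w := by
    rw [← SchwartzMap.lineDerivOp_apply_eq_fderiv, SchwartzMap.lineDerivOp_fourier_eq,
      FourierTransform.fourier_smul, smul_apply]
  rw [← fderiv_fourier]
  exact (𝓕 φ).differentiableAt.hasFDerivAt.comp_hasDerivAt u line

theorem norm_fourier_le_integral_norm (φ : 𝓢(E, F)) (y : E) : ‖𝓕 φ y‖ ≤ ∫ x, ‖φ x‖ := by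
  rw [SchwartzMap.fourier_coe]
  exact VectorFourier.norm_fourierIntegral_le_integral_norm _ _ _ _ _

theorem norm_fourier_le_of_norm_fourier_smul_le {ξ : E} (hξ : ‖ξ‖ = 1) (φ : 𝓢(E, F)) {N : ℕ}
    {C : ℝ} (hC : 0 ≤ C) (hφ : ∀ x, ⟪x, ξ⟫ = 0 → ∫ t : ℝ, φ (x + t • ξ) = 0)
    (hderiv : ∀ z, ‖𝓕 (SchwartzMap.smulLeftCLM F (inner ℝ · ξ) φ) z‖ ≤
      (2 * Real.pi * |⟪z, ξ⟫|) ^ N * C) (z : E) :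
    ‖𝓕 φ z‖ ≤ (2 * Real.pi * |⟪z, ξ⟫|) ^ (N + 1) * C := by
  set s := ⟪z, ξ⟫ with hs
  set y := z - s • ξ with hy
  have hyξ : ⟪y, ξ⟫ = 0 := by
    simp [hy, hs, inner_sub_left, real_inner_smul_left, hξ]
  have inner_line (u : ℝ) : ⟪y + u • ξ, ξ⟫ = u := by
    simp [inner_add_left, hyξ, real_inner_smul_left, hξ]
  have deriv_bound : ∀ u ∈ Set.uIcc 0 s,
      ‖-(2 * Real.pi * Complex.I) • 𝓕 (SchwartzMap.smulLeftCLM F (inner ℝ · ξ) φ) (y + u • ξ)‖ ≤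
        2 * Real.pi * ((2 * Real.pi * |s|) ^ N * C) := by
    intro u hu
    have hus : |u| ≤ |s| := by simpa using Set.abs_sub_left_of_mem_uIcc hu
    have hnorm : ‖-(2 * Real.pi * Complex.I)‖ = 2 * Real.pi := by
      simp [abs_of_pos Real.pi_pos]
    rw [norm_smul, hnorm]
    gcongr
    refine (hderiv _).trans ?_
    rw [inner_line]
    gcongr
  have mean_value := (convex_uIcc 0 s).norm_image_sub_le_of_norm_hasDerivWithin_le
    (fun u _ ↦ (hasDerivAt_fourier_add_smul φ y ξ u).hasDerivWithinAt) deriv_bound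
    Set.left_mem_uIcc Set.right_mem_uIcc
  rw [zero_smul, add_zero, fourier_eq_zero_of_integral_line_eq_zero hξ hyξ φ hφ, sub_zero,
    sub_zero, Real.norm_eq_abs, hy, sub_add_cancel] at mean_value
  exact mean_value.trans_eq (by ring)

theorem norm_fourier_le_of_moments_eq_zero {ξ : E} (hξ : ‖ξ‖ = 1) (N : ℕ) (φ : 𝓢(E, F))
    (hφ : ∀ l < N, ∀ x, ⟪x, ξ⟫ = 0 → ∫ t : ℝ, t ^ l • φ (x + t • ξ) = 0) (z : E) :
    ‖𝓕 φ z‖ ≤ (2 * Real.pi * |⟪z, ξ⟫|) ^ N * ∫ x, |⟪x, ξ⟫| ^ N * ‖φ x‖ := by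
  induction N generalizing φ z with
  | zero => simpa using norm_fourier_le_integral_norm φ z
  | succ N ih =>
    have smul_apply (x : E) : SchwartzMap.smulLeftCLM F (inner ℝ · ξ) φ x = ⟪x, ξ⟫ • φ x :=
      SchwartzMap.smulLeftCLM_apply_apply (by fun_prop) φ x
    have inner_line {x : E} (hx : ⟪x, ξ⟫ = 0) (t : ℝ) : ⟪x + t • ξ, ξ⟫ = t := by
      simp [inner_add_left, hx, real_inner_smul_left, hξ]
    refine norm_fourier_le_of_norm_fourier_smul_le hξ φ (by positivity)
      (by simpa using hφ 0 N.succ_pos) (fun z ↦ ?_) z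
    convert ih (SchwartzMap.smulLeftCLM F (inner ℝ · ξ) φ) (fun l hl x hx ↦ ?_) z using 3
    · ext x
      rw [smul_apply, norm_smul, Real.norm_eq_abs, pow_succ, mul_assoc]
    · simpa only [smul_apply, inner_line hx, smul_smul, ← pow_succ] using
        hφ (l + 1) (by lia) x hx

end Fourier

section Asymptotics

open Topology Asymptotics Finset

theorem coeff_eq_zero_of_sum_pow_smul_isBigO {𝕜 W : Type*} [NontriviallyNormedField 𝕜]
    [NormedAddCommGroup W] [NormedSpace 𝕜 W] {N : ℕ} {c : ℕ → W}
    (h : (fun s : 𝕜 ↦ ∑ j ∈ range N, s ^ j • c j) =O[𝓝[≠] 0] fun s ↦ s ^ N) :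
    ∀ j < N, c j = 0 := by
  induction N generalizing c with
  | zero => simp
  | succ N ih =>
    have split_off (s : 𝕜) : ∑ j ∈ range (N + 1), s ^ j • c j =
        s • ∑ j ∈ range N, s ^ j • c (j + 1) + c 0 := by
      simp [sum_range_succ', smul_sum, smul_smul, pow_succ']
    have constant_term : c 0 = 0 := by
      refine tendsto_nhds_unique (f := fun s : 𝕜 ↦ ∑ j ∈ range (N + 1), s ^ j • c j)
        (l := 𝓝[≠] 0) ?_ (h.trans_tendsto ?_)
      · exact (Continuous.tendsto' (by fun_prop) _ _ (by simp [split_off])).mono_left inf_le_left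
      · exact (Continuous.tendsto' (by fun_prop) _ _ (by simp)).mono_left inf_le_left
    have quotient : (fun s : 𝕜 ↦ ∑ j ∈ range N, s ^ j • c (j + 1)) =O[𝓝[≠] 0] fun s ↦ s ^ N := by
      refine ((isBigO_refl (fun s : 𝕜 ↦ s⁻¹) _).smul h).congr' ?_ ?_ <;>
        filter_upwards [self_mem_nhdsWithin] with s hs
      · rw [split_off, constant_term, add_zero, inv_smul_smul₀ hs]
      · rw [pow_succ', smul_eq_mul, inv_mul_cancel_left₀ hs]
    rintro (_ | j) hj
    exacts [constant_term, ih quotient j (by lia)]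

end Asymptotics

section Multilinear

open Topology Asymptotics Finset
open scoped ContinuousMultilinearMap

section Algebra

variable {R E W : Type*} [CommSemiring R] [AddCommMonoid E] [AddCommMonoid W] [Module R E]
  [Module R W]

theorem multilinear_const_add_smul {ι : Type*} [Fintype ι] [DecidableEq ι]
    (M : MultilinearMap R (fun _ : ι ↦ E) W) (w y : E) (s : R) :
    M (fun _ ↦ w + s • y) =
      ∑ S : Finset ι, s ^ #S • M (S.piecewise (fun _ ↦ y) fun _ ↦ w) := by
  rw [show (fun _ : ι ↦ w + s • y) = (fun _ ↦ s • y) + fun _ ↦ w from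
    funext fun _ ↦ add_comm _ _, M.map_add_univ]
  refine sum_congr rfl fun S _ ↦ ?_
  rw [← prod_const, ← M.map_piecewise_smul (fun _ ↦ s) (S.piecewise (fun _ ↦ y) fun _ ↦ w) S]
  congr 1
  ext r
  by_cases hr : r ∈ S <;> simp [hr]

variable {p N : ℕ} {M : MultilinearMap R (fun _ : Fin (p + N) ↦ E) W}

theorem multilinear_apply_eq_zero_of_le_card
    (symm : ∀ (σ : Equiv.Perm (Fin (p + N))) v, M (v ∘ σ) = M v) {y : E}
    (hy : ∀ v, M (Fin.append v fun _ ↦ y) = 0) {S : Finset (Fin (p + N))} (hS : N ≤ #S)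
    {v : Fin (p + N) → E} (hv : ∀ r ∈ S, v r = y) : M v = 0 := by
  obtain ⟨ι⟩ : Nonempty (Fin N ↪ S) := Function.Embedding.nonempty_of_card_le (by simpa using hS)
  have := Equiv.Perm.isMultiplyPretransitive (Fin (p + N)) N
  obtain ⟨σ, hσ⟩ := MulAction.exists_smul_eq (Equiv.Perm (Fin (p + N)))
    (Fin.natAddEmb p : Fin N ↪ Fin (p + N)) (ι.trans (.subtype _))
  have tail (r : Fin N) : v (σ (Fin.natAdd p r)) = y := by
    have : σ (Fin.natAdd p r) = ι r := DFunLike.congr_fun hσ r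
    exact hv _ (this ▸ (ι r).2)
  rw [← symm σ v, ← Fin.append_castAdd_natAdd (f := v ∘ σ)]
  convert hy _ using 3
  exact funext tail

theorem exists_multilinear_const_add_smul_eq_sum_range
    (symm : ∀ (σ : Equiv.Perm (Fin (p + N))) v, M (v ∘ σ) = M v) {y : E}
    (hy : ∀ v, M (Fin.append v fun _ ↦ y) = 0) (w : E) :
    ∃ c : ℕ → W, ∀ s : R, M (fun _ ↦ w + s • y) = ∑ j ∈ range N, s ^ j • c j := by
  let term (S : Finset (Fin (p + N))) : W := M (S.piecewise (fun _ ↦ y) fun _ ↦ w)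
  refine ⟨fun j ↦ ∑ S with #S = j, term S, fun s ↦ ?_⟩
  have high_terms (S : Finset (Fin (p + N))) (hS : N ≤ #S) : term S = 0 :=
    multilinear_apply_eq_zero_of_le_card symm hy hS fun r hr ↦ by simp [hr]
  calc M (fun _ ↦ w + s • y) = ∑ S, s ^ #S • term S := multilinear_const_add_smul M w y s
    _ = ∑ S with #S < N, s ^ #S • term S := by
        refine (sum_filter_of_ne fun S _ hS ↦ ?_).symm
        contrapose! hS
        rw [high_terms S hS, smul_zero]
    _ = ∑ j ∈ range N, ∑ S with #S = j, s ^ #S • term S := by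
        rw [← sum_fiberwise_of_maps_to (t := range N) (g := card) (by simp)]
        refine sum_congr rfl fun j hj ↦ sum_congr ?_ fun _ _ ↦ rfl
        ext S
        simp only [mem_filter, mem_univ, true_and, mem_range] at hj ⊢
        lia
    _ = ∑ j ∈ range N, s ^ j • ∑ S with #S = j, term S := by
        refine sum_congr rfl fun j _ ↦ ?_
        rw [smul_sum]
        exact sum_congr rfl fun S hS ↦ by rw [(mem_filter.1 hS).2]

end Algebra

variable {E W : Type*} [NormedAddCommGroup E] [NormedAddCommGroup W] [NormedSpace ℝ W]

theorem continuousMultilinear_eq_zero_of_diagonal_eq_zero [NormedSpace ℝ E] {m : ℕ}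
    {M : E [×m]→L[ℝ] W} (symm : ∀ (σ : Equiv.Perm (Fin m)) v, M (v ∘ σ) = M v)
    (diag : ∀ x, M (fun _ ↦ x) = 0) : M = 0 := by
  ext v
  have polarization : 0 = ∑ σ : Equiv.Perm (Fin m), M (v ∘ σ) := by
    simpa [diag, Function.comp_def] using M.iteratedFDeriv_comp_diagonal 0 v
  simpa [symm, ← Nat.cast_smul_eq_nsmul ℝ, Nat.factorial_ne_zero] using polarization.symm

theorem multilinear_const_add_smul_eq_zero_of_isBigO [NormedSpace ℝ E] {p N : ℕ}
    {M : E [×(p + N)]→L[ℝ] W}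
    (symm : ∀ (σ : Equiv.Perm (Fin (p + N))) v, M (v ∘ σ) = M v) {y w : E}
    (hy : ∀ v, M (Fin.append v fun _ ↦ y) = 0)
    (hw : (fun s : ℝ ↦ M fun _ ↦ w + s • y) =O[𝓝[≠] 0] fun s ↦ s ^ N) (s : ℝ) :
    M (fun _ ↦ w + s • y) = 0 := by
  obtain ⟨c, hc⟩ := exists_multilinear_const_add_smul_eq_sum_range
    (M := M.toMultilinearMap) symm hy w
  simp only [ContinuousMultilinearMap.coe_coe] at hc
  simp only [hc] at hw ⊢
  exact sum_eq_zero fun j hj ↦ by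
    rw [coeff_eq_zero_of_sum_pow_smul_isBigO hw j (mem_range.1 hj), smul_zero]

theorem continuousMultilinear_eq_zero_of_isBigO [InnerProductSpace ℝ E] {p N : ℕ}
    {M : E [×(p + N)]→L[ℝ] W}
    (symm : ∀ (σ : Equiv.Perm (Fin (p + N))) v, M (v ∘ σ) = M v) {y : E}
    (hy : ∀ v, M (Fin.append v fun _ ↦ y) = 0)
    (decay : ∀ w, ⟪y, w⟫ = 0 → (fun s : ℝ ↦ M fun _ ↦ w + s • y) =O[𝓝[≠] 0] fun s ↦ s ^ N) :
    M = 0 := by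
  refine continuousMultilinear_eq_zero_of_diagonal_eq_zero symm fun x ↦ ?_
  obtain ⟨_, hsy, w, hw, rfl⟩ := (ℝ ∙ y).exists_add_mem_mem_orthogonal x
  obtain ⟨s, rfl⟩ := Submodule.mem_span_singleton.1 hsy
  rw [Submodule.mem_orthogonal_singleton_iff_inner_right] at hw
  simpa only [add_comm] using multilinear_const_add_smul_eq_zero_of_isBigO symm hy (decay w hw) s

end Multilinear

section TensorForm

open Finset
open scoped ContinuousMultilinearMap

/-- The multilinear form `(v₁, …, v_m) ↦ ∑ F_{i₁…i_m} v₁^{i₁} ⋯ v_m^{i_m}` whose components are the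
`W`-valued tensor `F`. -/
def tensorForm {n m : ℕ} {W : Type*} [AddCommGroup W] [Module ℝ W] [TopologicalSpace W]
    [IsTopologicalAddGroup W] [ContinuousSMul ℝ W] (F : (Fin m → Fin n) → W) :
    En n [×m]→L[ℝ] W :=
  ∑ i, ((ContinuousMultilinearMap.mkPiAlgebra ℝ (Fin m) ℝ).compContinuousLinearMap
    fun r ↦ EuclideanSpace.proj (i r)).smulRight (F i)

variable {n m : ℕ} {W : Type*} [AddCommGroup W] [Module ℝ W] [TopologicalSpace W]
  [IsTopologicalAddGroup W] [ContinuousSMul ℝ W]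

theorem tensorForm_apply (F : (Fin m → Fin n) → W) (v : Fin m → En n) :
    tensorForm F v = ∑ i, (∏ r, v r (i r)) • F i := by
  simp [tensorForm]

theorem tensorForm_single (F : (Fin m → Fin n) → W) (i : Fin m → Fin n) :
    tensorForm F (fun r ↦ EuclideanSpace.single (i r) 1) = F i := by
  simp [tensorForm_apply, Fintype.prod_ite_zero, ← funext_iff]

theorem tensorForm_comp_perm {F : (Fin m → Fin n) → W}
    (symm : ∀ (σ : Equiv.Perm (Fin m)) i, F (i ∘ σ) = F i) (σ : Equiv.Perm (Fin m))
    (v : Fin m → En n) : tensorForm F (v ∘ σ) = tensorForm F v := by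
  rw [tensorForm_apply, tensorForm_apply]
  refine Fintype.sum_equiv (σ.arrowCongr (.refl _)) _ _ fun i ↦ ?_
  change _ = (∏ r, v r (i (σ.symm r))) • F (i ∘ σ.symm)
  rw [symm, ← Equiv.prod_comp σ fun r ↦ v r (i (σ.symm r))]
  simp only [Function.comp_apply, Equiv.symm_apply_apply]

theorem tensorForm_snoc (F : (Fin (m + 1) → Fin n) → W) (v : Fin m → En n) (y : En n) :
    tensorForm F (Fin.snoc v y) = tensorForm (fun i ↦ ∑ j, y j • F (Fin.snoc i j)) v := by
  simp only [tensorForm_apply, smul_sum, ← (Fin.snocEquiv fun _ ↦ Fin n).sum_comp,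
    Fintype.sum_prod_type_right]
  simp [Fin.snocEquiv, Fin.prod_univ_castSucc, smul_smul]

theorem norm_tensorForm_le {V : Type*} [NormedAddCommGroup V] [NormedSpace ℝ V]
    (F : (Fin m → Fin n) → V) (v : Fin m → En n) :
    ‖tensorForm F v‖ ≤ (∏ r, ‖v r‖) * ∑ i, ‖F i‖ := by
  rw [tensorForm_apply, mul_sum]
  refine norm_sum_le_of_le _ fun i _ ↦ ?_
  rw [norm_smul, norm_prod]
  gcongr
  exact PiLp.norm_apply_le _ _

end TensorForm

section TensorField

open Topology Asymptotics Finset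

variable {n m : ℕ}

theorem IsSchwartzField.exists_complexification {f : (Fin m → Fin n) → En n → ℝ}
    (hf : IsSchwartzField f) :
    ∃ g : (Fin m → Fin n) → 𝓢(En n, ℂ), ∀ i x, g i x = f i x := by
  choose φ hφ using hf
  exact ⟨fun i ↦ (φ i).postcompCLM Complex.ofRealCLM, fun i x ↦ by simp [hφ]⟩

/-- The divergence of a complex-valued Schwartz tensor field, contracting the last index. -/
def schwartzDiv (g : (Fin (m + 1) → Fin n) → 𝓢(En n, ℂ)) : (Fin m → Fin n) → 𝓢(En n, ℂ) :=
  fun i ↦ ∑ j, ∂_{EuclideanSpace.single j (1 : ℝ)} (g (Fin.snoc i j))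

/-- The Fourier transform at `y` of a tensor field, as a multilinear form. -/
def fourierForm (g : (Fin m → Fin n) → 𝓢(En n, ℂ)) (y : En n) :
    ContinuousMultilinearMap ℝ (fun _ : Fin m ↦ En n) ℂ :=
  tensorForm fun i ↦ 𝓕 (g i) y

theorem schwartzDiv_apply_eq_divg {f : (Fin (m + 1) → Fin n) → En n → ℝ}
    {g : (Fin (m + 1) → Fin n) → 𝓢(En n, ℂ)} (hg : ∀ i x, g i x = f i x) (i : Fin m → Fin n)
    (x : En n) : schwartzDiv g i x = divg f i x := by
  have pd_eq (i : Fin (m + 1) → Fin n) (j : Fin n) :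
      ∂_{EuclideanSpace.single j (1 : ℝ)} (g i) x = pd j (f i) x := by
    have f_diff : DifferentiableAt ℝ (f i) x := by
      have : f i = fun x ↦ (g i x).re := by ext; simp [hg]
      rw [this]
      exact Complex.reCLM.differentiableAt.comp x (g i).differentiableAt
    have g_deriv := Complex.ofRealCLM.hasFDerivAt.comp x f_diff.hasFDerivAt
    rw [SchwartzMap.lineDerivOp_apply_eq_fderiv, show ⇑(g i) = Complex.ofRealCLM ∘ f i from
      funext (hg i), g_deriv.fderiv]
    rfl
  simp [schwartzDiv, divg, pd_eq]

theorem fourierForm_schwartzDiv (g : (Fin (m + 1) → Fin n) → 𝓢(En n, ℂ)) (y : En n)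
    (v : Fin m → En n) :
    fourierForm (schwartzDiv g) y v =
      (2 * Real.pi * Complex.I) * fourierForm g y (Fin.snoc v y) := by
  have fourier_schwartzDiv (i : Fin m → Fin n) : 𝓕 (schwartzDiv g i) y =
      (2 * Real.pi * Complex.I) * ∑ j, y j • 𝓕 (g (Fin.snoc i j)) y := by
    have smul_coord (j : Fin n) (h : 𝓢(En n, ℂ)) : SchwartzMap.smulLeftCLM ℂ
        (inner ℝ · (EuclideanSpace.single j (1 : ℝ))) h y = y j • h y := by
      rw [SchwartzMap.smulLeftCLM_apply_apply (by fun_prop), EuclideanSpace.inner_single_right]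
      simp
    simp [schwartzDiv, FourierTransform.fourier_sum, SchwartzMap.fourier_lineDerivOp_eq, mul_sum,
      smul_coord]
  simp only [fourierForm, fourier_schwartzDiv, tensorForm_snoc]
  simp only [tensorForm_apply, mul_sum, mul_smul_comm]

theorem fourierForm_append_eq_zero_of_divpow_eq_zero {p N : ℕ}
    {f : (Fin (p + N) → Fin n) → En n → ℝ} {g : (Fin (p + N) → Fin n) → 𝓢(En n, ℂ)}
    (hg : ∀ i x, g i x = f i x) (hf : ∀ i x, divpow N (p := p) f i x = 0) (y : En n)
    (v : Fin p → En n) : fourierForm g y (Fin.append v fun _ ↦ y) = 0 := by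
  induction N with
  | zero =>
    have g_zero (i : Fin p → Fin n) : g i = 0 := by
      ext x
      exact (hg i x).trans (congrArg _ (hf i x))
    simp [fourierForm, tensorForm_apply, g_zero]
  | succ N ih =>
    have := ih (schwartzDiv_apply_eq_divg hg) hf
    have snoc_const : Fin.snoc (fun _ : Fin N ↦ y) y = fun _ : Fin (N + 1) ↦ y :=
      Fin.snoc_init_self (α := fun _ ↦ En n) fun _ ↦ y
    rw [fourierForm_schwartzDiv, ← Fin.append_snoc, snoc_const] at this
    exact (mul_eq_zero.1 this).resolve_left Complex.two_pi_I_ne_zero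

theorem eq_zero_of_fourierForm_eq_zero {g : (Fin m → Fin n) → 𝓢(En n, ℂ)}
    (hg : ∀ y, fourierForm g y = 0) (i : Fin m → Fin n) : g i = 0 := by
  have fourier_zero : 𝓕 (g i) = 0 := by
    ext y
    rw [← tensorForm_single (fun i ↦ 𝓕 (g i) y) i]
    exact DFunLike.congr_fun (hg y) _
  simpa [fourier_zero] using
    (FourierTransform.fourierInv_fourier_eq (F := 𝓢(En n, ℂ)) (g i)).symm

theorem integral_tensorForm_line_eq_momRT {f : (Fin m → Fin n) → En n → ℝ}
    {g : (Fin m → Fin n) → 𝓢(En n, ℂ)} (hg : ∀ i x, g i x = f i x) (l : ℕ) (x ξ : En n) :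
    ∫ t : ℝ, t ^ l • tensorForm g (fun _ ↦ ξ) (x + t • ξ) = momRT l f x ξ := by
  rw [momRT, ← integral_complex_ofReal]
  simp [tensorForm_apply, hg, mul_comm]

theorem fourierForm_apply (g : (Fin m → Fin n) → 𝓢(En n, ℂ)) (y : En n) (v : Fin m → En n) :
    fourierForm g y v = 𝓕 (tensorForm g v) y := by
  simp [fourierForm, tensorForm_apply, FourierTransform.fourier_sum, FourierTransform.fourier_smul]

theorem norm_fourierForm_le_of_moments_eq_zero (g : (Fin m → Fin n) → 𝓢(En n, ℂ)) {N : ℕ}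
    {ξ : En n} (hξ : ‖ξ‖ = 1)
    (moments : ∀ l < N, ∀ x, ⟪x, ξ⟫ = 0 →
      ∫ t : ℝ, t ^ l • tensorForm g (fun _ ↦ ξ) (x + t • ξ) = 0) (z : En n) :
    ‖fourierForm g z fun _ ↦ ξ‖ ≤
      (2 * Real.pi * |⟪z, ξ⟫|) ^ N * ∫ x, ‖x‖ ^ N * ∑ i, ‖g i x‖ := by
  have integrable_bound : Integrable fun x ↦ ‖x‖ ^ N * ∑ i, ‖g i x‖ := by
    simp only [mul_sum]
    exact integrable_finsetSum _ fun i _ ↦ (g i).integrable_pow_mul volume N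
  rw [fourierForm_apply]
  refine (norm_fourier_le_of_moments_eq_zero hξ N _ moments z).trans ?_
  gcongr ?_ * ?_
  refine integral_mono_of_nonneg (.of_forall fun x ↦ by positivity) integrable_bound
    (.of_forall fun x ↦ ?_)
  have inner_le : |⟪x, ξ⟫| ≤ ‖x‖ := by simpa [hξ] using abs_real_inner_le_norm x ξ
  have form_le : ‖tensorForm g (fun _ ↦ ξ) x‖ ≤ ∑ i, ‖g i x‖ := by
    simpa [tensorForm_apply, hξ] using norm_tensorForm_le (fun i ↦ g i x) fun _ ↦ ξ
  dsimp only
  gcongr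

theorem norm_fourierForm_le_of_forall_moments_eq_zero {p N : ℕ} [NeZero N]
    (g : (Fin (p + N) → Fin n) → 𝓢(En n, ℂ))
    (moments : ∀ l < N, ∀ x ξ, ‖ξ‖ = 1 → ⟪x, ξ⟫ = 0 →
      ∫ t : ℝ, t ^ l • tensorForm g (fun _ ↦ ξ) (x + t • ξ) = 0) (z ξ : En n) :
    ‖fourierForm g z fun _ ↦ ξ‖ ≤
      (2 * Real.pi * |⟪z, ξ⟫|) ^ N * ‖ξ‖ ^ p * ∫ x, ‖x‖ ^ N * ∑ i, ‖g i x‖ := by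
  rcases eq_or_ne ξ 0 with rfl | hξ
  · rw [ContinuousMultilinearMap.map_coord_zero _ (Fin.natAdd p (0 : Fin N)) rfl, norm_zero]
    positivity
  obtain ⟨η, η_unit, ξ_eq⟩ : ∃ η, ‖η‖ = 1 ∧ ‖ξ‖ • η = ξ :=
    ⟨‖ξ‖⁻¹ • ξ, norm_smul_inv_norm hξ, smul_inv_smul₀ (norm_ne_zero_iff.2 hξ) ξ⟩
  have inner_eq : |⟪z, ξ⟫| = ‖ξ‖ * |⟪z, η⟫| := by
    conv_lhs => rw [← ξ_eq, real_inner_smul_right, abs_mul, abs_norm]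
  calc ‖fourierForm g z fun _ ↦ ξ‖ = ‖ξ‖ ^ (p + N) * ‖fourierForm g z fun _ ↦ η‖ := by
        conv_lhs => rw [← ξ_eq, ContinuousMultilinearMap.map_smul_univ]
        simp
    _ ≤ ‖ξ‖ ^ (p + N) * ((2 * Real.pi * |⟪z, η⟫|) ^ N * ∫ x, ‖x‖ ^ N * ∑ i, ‖g i x‖) := by
        gcongr
        exact norm_fourierForm_le_of_moments_eq_zero g η_unit
          (fun l hl x hx ↦ moments l hl x η η_unit hx) z
    _ = (2 * Real.pi * |⟪z, ξ⟫|) ^ N * ‖ξ‖ ^ p * ∫ x, ‖x‖ ^ N * ∑ i, ‖g i x‖ := by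
        rw [inner_eq]
        ring

theorem fourierForm_const_add_smul_isBigO_pow {p N : ℕ} [NeZero N]
    (g : (Fin (p + N) → Fin n) → 𝓢(En n, ℂ))
    (moments : ∀ l < N, ∀ x ξ, ‖ξ‖ = 1 → ⟪x, ξ⟫ = 0 →
      ∫ t : ℝ, t ^ l • tensorForm g (fun _ ↦ ξ) (x + t • ξ) = 0) {z w : En n} (hzw : ⟪z, w⟫ = 0) :
    (fun s : ℝ ↦ fourierForm g z fun _ ↦ w + s • z) =O[𝓝[≠] 0] fun s ↦ s ^ N := by
  have bounded : (fun s : ℝ ↦ (2 * Real.pi * ‖z‖ ^ 2) ^ N * ‖w + s • z‖ ^ p *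
      ∫ x, ‖x‖ ^ N * ∑ i, ‖g i x‖) =O[𝓝[≠] 0] fun _ ↦ (1 : ℝ) :=
    ((Continuous.tendsto (by fun_prop) 0).mono_left inf_le_left).isBigO_one ℝ
  refine .trans (.of_norm_le fun s ↦ ?_)
    ((bounded.mul (isBigO_refl (fun s : ℝ ↦ |s| ^ N) _)).trans ?_)
  · refine (norm_fourierForm_le_of_forall_moments_eq_zero g moments z _).trans_eq ?_
    rw [inner_add_right, hzw, real_inner_smul_right, real_inner_self_eq_norm_sq, zero_add, abs_mul,
      abs_of_nonneg (sq_nonneg ‖z‖)]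
    ring
  · simpa using (isBigO_refl (fun s : ℝ ↦ s ^ N) (𝓝[≠] 0)).norm_left

end TensorField

/-- injectivity of `𝓘^k = (I^0,…,I^k)` on `(k+1)`-solenoidal
Schwartz tensor fields.  The rank is `m = p + (k+1)` (so `0 ≤ k ≤ m − 1`). -/
theorem momRT_injectivity_on_solenoidal
    (n p k : ℕ) (hn : 2 ≤ n)
    (f : (Fin (p + (k + 1)) → Fin n) → En n → ℝ)
    (hf : IsSchwartzField f) (hfsym : IsSymField f)
    (hsol : ∀ i x, divpow (k + 1) (p := p) f i x = 0)
    (hI : ∀ ℓ, ℓ ≤ k → ∀ x ξ : En n, ‖ξ‖ = 1 → ⟪x, ξ⟫ = 0 → momRT ℓ f x ξ = 0) :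
    ∀ i x, f i x = 0 := by
  obtain ⟨g, hg⟩ := hf.exists_complexification
  have g_symm (σ : Equiv.Perm (Fin (p + (k + 1)))) (i : Fin (p + (k + 1)) → Fin n) :
      g (i ∘ σ) = g i := by
    ext x
    rw [hg, hg, hfsym]
  have moments : ∀ l < k + 1, ∀ x ξ : En n, ‖ξ‖ = 1 → ⟪x, ξ⟫ = 0 →
      ∫ t : ℝ, t ^ l • tensorForm g (fun _ ↦ ξ) (x + t • ξ) = 0 := fun l hl x ξ hξ hx ↦ by
    rw [integral_tensorForm_line_eq_momRT hg, hI l (Nat.le_of_lt_succ hl) x ξ hξ hx,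
      Complex.ofReal_zero]
  have fourierForm_zero (y : En n) : fourierForm g y = 0 :=
    continuousMultilinear_eq_zero_of_isBigO
      (tensorForm_comp_perm fun σ i ↦ by rw [g_symm])
      (fourierForm_append_eq_zero_of_divpow_eq_zero hg hsol y)
      fun _ ↦ fourierForm_const_add_smul_isBigO_pow g moments
  intro i x
  simpa [eq_zero_of_fourierForm_eq_zero fourierForm_zero] using (hg i x).symm
end
end

section
/- Let n ≥ 2 and 1 ≤ k ≤ min{m−1, n−1}. A symmetric m-tensor field f ∈ 𝒮(S^m) with Schwartz components satisfies 𝓘^k f = 0 (i.e. I^ℓ f = 0 for ℓ = 0,…,k) if and only if f = d^{k+1} v for some smooth symmetric (m−k−1)-tensor field v ∈ C^∞(S^{m−k−1}) such that d^ℓ v(x) → 0 as |x| → ∞ for every 0 ≤ ℓ ≤ k. -/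
noncomputable section

open MeasureTheory Filter
open scoped RealInnerProductSpace BigOperators

/-!
Both directions come down to lines. If `f = d^{k+1} v`, then along a line of direction `ξ` the
functions `φ_l = ⟨d^l v, ξ^{p+l}⟩` satisfy `φ_l' = φ_{l+1}` and tend to `0`, while `φ_{k+1}` is
Schwartz; hence all of them are Schwartz, and integration by parts kills the moments of `φ_{k+1}` of
order at most `k`.

Conversely, put `c = k + 1`. If the moments of order less than `c` of `⟨f, ω^m⟩` vanish on all
lines of direction `ω`, then `⟨f, ω^m⟩` can be integrated `c` times along `ω`, which gives a
Schwartz function `V_ω` with `∂_ω^c V_ω = ⟨f, ω^m⟩` whose `L¹` norm is bounded uniformly in `ω`.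
Extend `V` to all directions by homogeneity. For fixed `y ≠ 0`, the polynomial `ξ ↦ ⟨f̂(y), ξ^m⟩`
equals `(2πi⟨y, ξ⟩)^c V̂_ξ(y)` with a bounded second factor, so it vanishes to order `c` on the
hyperplane `⟨y, ξ⟩ = 0` and is divisible by `⟨y, ξ⟩^c`. The quotient `V̂_ξ(y)` is therefore a
homogeneous polynomial of degree `p` in `ξ`, and polarization recovers its coefficients from its
values at finitely many nodes `ξ` that do not depend on `y`. The same linear combinations of the
functions `V_ξ` are the components of a Schwartz field `w`, and `d^c w = f` holds on the Fourier
side for all `y` off finitely many hyperplanes, hence everywhere.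
-/

open scoped SchwartzMap LineDeriv FourierTransform Topology

section LineIntegral

universe u v

variable {E : Type u} [NormedAddCommGroup E] [InnerProductSpace ℝ E]
variable {F : Type v} [NormedAddCommGroup F]
variable {ω : E}

lemma one_add_sq_le_mul_one_add_norm_sq (hω : ‖ω‖ = 1) (x : E) (s : ℝ) :
    1 + s ^ 2 ≤ (1 + ‖x‖) ^ 2 * (1 + ‖x + s • ω‖) ^ 2 := by
  have hs : |s| ≤ ‖x + s • ω‖ + ‖x‖ := by
    simpa [norm_smul, hω] using norm_sub_le (x + s • ω) x
  have h : 1 + |s| ≤ (1 + ‖x‖) * (1 + ‖x + s • ω‖) := by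
    nlinarith [mul_nonneg (norm_nonneg x) (norm_nonneg (x + s • ω))]
  calc 1 + s ^ 2 ≤ (1 + |s|) ^ 2 := by nlinarith [abs_nonneg s, sq_abs s]
    _ ≤ ((1 + ‖x‖) * (1 + ‖x + s • ω‖)) ^ 2 := by gcongr
    _ = _ := mul_pow _ _ 2

lemma one_add_norm_pow_mul_norm_line_le {g : E → F} {N : ℕ} {B : ℝ} (hω : ‖ω‖ = 1)
    (hB : ∀ x, (1 + ‖x‖) ^ (N + 2) * ‖g x‖ ≤ B) {x : E} {s : ℝ} (hs : 0 ≤ s * ⟪x, ω⟫) :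
    (1 + ‖x‖) ^ N * ‖g (x + s • ω)‖ ≤ B * (1 + s ^ 2)⁻¹ := by
  have hsq : ‖x + s • ω‖ ^ 2 = ‖x‖ ^ 2 + 2 * (s * ⟪x, ω⟫) + s ^ 2 := by
    simp [norm_add_sq_real, inner_smul_right, norm_smul, hω]
  have hx : ‖x‖ ≤ ‖x + s • ω‖ := by
    apply le_of_sq_le_sq _ (norm_nonneg _)
    nlinarith [sq_nonneg s]
  have hs' : 1 + s ^ 2 ≤ (1 + ‖x + s • ω‖) ^ 2 := by
    nlinarith [norm_nonneg (x + s • ω), sq_nonneg ‖x‖]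
  rw [← div_eq_mul_inv, le_div_iff₀ (by positivity)]
  calc (1 + ‖x‖) ^ N * ‖g (x + s • ω)‖ * (1 + s ^ 2)
      ≤ (1 + ‖x + s • ω‖) ^ N * ‖g (x + s • ω)‖ * (1 + ‖x + s • ω‖) ^ 2 := by gcongr
    _ = (1 + ‖x + s • ω‖) ^ (N + 2) * ‖g (x + s • ω)‖ := by ring
    _ ≤ B := hB _

variable [NormedSpace ℝ F]
-- The universe of `E`: inductions over derivatives pass from `G` to `E →L[ℝ] G`.
variable {G : Type u} [NormedAddCommGroup G] [NormedSpace ℝ G]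

lemma exists_one_add_norm_pow_mul_norm_le (g : 𝓢(E, F)) (N : ℕ) :
    ∃ B, ∀ x, (1 + ‖x‖) ^ N * ‖g x‖ ≤ B := by
  refine ⟨2 ^ N * (Finset.Iic (N, 0)).sup (fun m => SchwartzMap.seminorm ℝ m.1 m.2) g, fun x => ?_⟩
  simpa using SchwartzMap.one_add_le_sup_seminorm_apply (𝕜 := ℝ) (m := (N, 0))
    le_rfl le_rfl g x

lemma exists_norm_line_le (g : 𝓢(E, F)) (hω : ‖ω‖ = 1) :
    ∃ B, 0 ≤ B ∧ ∀ (x : E) (s : ℝ),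
      ‖g (x + s • ω)‖ ≤ B * (1 + ‖x‖) ^ 2 * (1 + s ^ 2)⁻¹ := by
  obtain ⟨B, hB⟩ := exists_one_add_norm_pow_mul_norm_le g 2
  refine ⟨B, le_trans (by positivity) (hB 0), fun x s => ?_⟩
  rw [← div_eq_mul_inv, le_div_iff₀ (by positivity)]
  calc ‖g (x + s • ω)‖ * (1 + s ^ 2)
      ≤ ‖g (x + s • ω)‖ * ((1 + ‖x‖) ^ 2 * (1 + ‖x + s • ω‖) ^ 2) := by
        gcongr; exact one_add_sq_le_mul_one_add_norm_sq hω x s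
    _ = ((1 + ‖x + s • ω‖) ^ 2 * ‖g (x + s • ω)‖) * (1 + ‖x‖) ^ 2 := by ring
    _ ≤ B * (1 + ‖x‖) ^ 2 := by gcongr; exact hB _

lemma integrable_line (g : 𝓢(E, F)) (hω : ‖ω‖ = 1) (x : E) :
    Integrable (fun s : ℝ => g (x + s • ω)) := by
  obtain ⟨B, -, hB⟩ := exists_norm_line_le g hω
  exact (integrable_inv_one_add_sq.const_mul (B * (1 + ‖x‖) ^ 2)).mono'
    (g.continuous.comp (by fun_prop)).aestronglyMeasurable (.of_forall (hB x))

lemma hasDerivAt_line (g : 𝓢(E, F)) (ω x : E) (s : ℝ) :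
    HasDerivAt (fun s : ℝ => g (x + s • ω)) (∂_{ω} g (x + s • ω)) s := by
  have hline : HasDerivAt (fun s : ℝ => x + s • ω) ω s := by
    simpa using ((hasDerivAt_id s).smul_const ω).const_add x
  rw [SchwartzMap.lineDerivOp_apply_eq_fderiv]
  exact (g.hasFDerivAt _).comp_hasDerivAt s hline

/-- The integral of `g` over the part `{x + s • ω | s ∈ S}` of the line through `x` with direction
`ω`. For `S = univ` it is the ray transform of `g`; for `S = Iic 0` it is, as a function of `x`, an
antiderivative of `g` in the direction `ω`. -/
def lineIntegral (S : Set ℝ) (g : E → F) (ω x : E) : F :=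
  ∫ s in S, g (x + s • ω)

lemma hasFDerivAt_lineIntegral (S : Set ℝ) (g : 𝓢(E, F)) (hω : ‖ω‖ = 1) (x : E) :
    HasFDerivAt (lineIntegral S g ω) (lineIntegral S (SchwartzMap.fderivCLM ℝ E F g) ω x) x := by
  obtain ⟨B, hB0, hB⟩ := exists_norm_line_le (SchwartzMap.fderivCLM ℝ E F g) hω
  refine hasFDerivAt_integral_of_dominated_of_fderiv_le (μ := volume.restrict S)
    (F' := fun y s => SchwartzMap.fderivCLM ℝ E F g (y + s • ω))
    (bound := fun s => B * (2 + ‖x‖) ^ 2 * (1 + s ^ 2)⁻¹)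
    (Metric.ball_mem_nhds x one_pos)
    (.of_forall fun y => (g.continuous.comp (by fun_prop)).aestronglyMeasurable)
    (integrable_line g hω x).restrict
    ((SchwartzMap.fderivCLM ℝ E F g).continuous.comp (by fun_prop)).aestronglyMeasurable
    (.of_forall fun s y hy => (hB y s).trans ?_)
    (integrable_inv_one_add_sq.const_mul _).restrict
    (.of_forall fun s y _ => ?_)
  · have hyx : ‖y‖ ≤ 1 + ‖x‖ := by
      have := norm_sub_norm_le y x
      linarith [mem_ball_iff_norm.1 hy]
    have : 1 + ‖y‖ ≤ 2 + ‖x‖ := by linarith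
    gcongr
  · exact (g.hasFDerivAt _).comp y ((hasFDerivAt_id y).add_const _)

lemma fderiv_lineIntegral (S : Set ℝ) (g : 𝓢(E, F)) (hω : ‖ω‖ = 1) :
    fderiv ℝ (lineIntegral S g ω) = lineIntegral S (SchwartzMap.fderivCLM ℝ E F g) ω :=
  funext fun x => (hasFDerivAt_lineIntegral S g hω x).fderiv

lemma contDiff_lineIntegral (S : Set ℝ) (g : 𝓢(E, G)) (hω : ‖ω‖ = 1) (n : ℕ) :
    ContDiff ℝ n (lineIntegral S g ω) := by
  induction n generalizing G with
  | zero =>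
    exact contDiff_zero.2 (continuous_iff_continuousAt.2 fun x =>
      (hasFDerivAt_lineIntegral S g hω x).continuousAt)
  | succ n ih =>
    rw [Nat.cast_succ, contDiff_succ_iff_fderiv, fderiv_lineIntegral S g hω]
    exact ⟨fun x => (hasFDerivAt_lineIntegral S g hω x).differentiableAt, by simp, ih _⟩

lemma lineIntegral_univ_fderiv_eq_zero (g : 𝓢(E, F)) (hω : ‖ω‖ = 1)
    (h0 : lineIntegral Set.univ g ω = 0) :
    lineIntegral Set.univ (SchwartzMap.fderivCLM ℝ E F g) ω = 0 := by
  rw [← fderiv_lineIntegral _ g hω, h0, fderiv_zero]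

lemma lineIntegral_Iic_eq_neg_Ioi (g : 𝓢(E, F)) (hω : ‖ω‖ = 1)
    (h0 : lineIntegral Set.univ g ω = 0) (x : E) :
    lineIntegral (Set.Iic 0) g ω x = -lineIntegral (Set.Ioi 0) g ω x := by
  have hg : ∫ s : ℝ, g (x + s • ω) = 0 := by simpa [lineIntegral] using congrFun h0 x
  have h := integral_add_compl (measurableSet_Iic (a := (0 : ℝ))) (integrable_line g hω x)
  rw [hg, Set.compl_Iic] at h
  exact eq_neg_of_add_eq_zero_left h

lemma one_add_norm_pow_mul_norm_lineIntegral_le {g : E → F} {N : ℕ} {B : ℝ} (hω : ‖ω‖ = 1)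
    (hB : ∀ x, (1 + ‖x‖) ^ (N + 2) * ‖g x‖ ≤ B) {S : Set ℝ} (hS : MeasurableSet S) {x : E}
    (hx : ∀ s ∈ S, 0 ≤ s * ⟪x, ω⟫) :
    (1 + ‖x‖) ^ N * ‖lineIntegral S g ω x‖ ≤ Real.pi * B := by
  have hB0 : 0 ≤ B := le_trans (by positivity) (hB 0)
  have hint := integrable_inv_one_add_sq.const_mul B
  calc (1 + ‖x‖) ^ N * ‖lineIntegral S g ω x‖
      = ‖∫ s in S, (1 + ‖x‖) ^ N • g (x + s • ω)‖ := by
        rw [integral_smul, norm_smul, Real.norm_of_nonneg (by positivity), lineIntegral]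
    _ ≤ ∫ s in S, B * (1 + s ^ 2)⁻¹ := by
        refine norm_integral_le_of_norm_le hint.restrict
          ((ae_restrict_iff' hS).2 (.of_forall fun s hs => ?_))
        rw [norm_smul, Real.norm_of_nonneg (by positivity)]
        exact one_add_norm_pow_mul_norm_line_le hω hB (hx s hs)
    _ ≤ ∫ s, B * (1 + s ^ 2)⁻¹ :=
        setIntegral_le_integral hint (.of_forall fun s => by positivity)
    _ = Real.pi * B := by rw [integral_const_mul, integral_univ_inv_one_add_sq, mul_comm]

-- One of the two half-lines from `x` leads away from the origin, and since the integral over the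
-- whole line vanishes, either of them computes the antiderivative.
lemma one_add_norm_pow_mul_norm_lineIntegral_Iic_le (g : 𝓢(E, F)) (hω : ‖ω‖ = 1)
    (h0 : lineIntegral Set.univ g ω = 0) {N : ℕ} {B : ℝ}
    (hB : ∀ x, (1 + ‖x‖) ^ (N + 2) * ‖g x‖ ≤ B) (x : E) :
    (1 + ‖x‖) ^ N * ‖lineIntegral (Set.Iic 0) g ω x‖ ≤ Real.pi * B := by
  rcases le_total ⟪x, ω⟫ 0 with h | h
  · exact one_add_norm_pow_mul_norm_lineIntegral_le hω hB measurableSet_Iic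
      fun s hs => mul_nonneg_of_nonpos_of_nonpos hs h
  · rw [lineIntegral_Iic_eq_neg_Ioi g hω h0, norm_neg]
    exact one_add_norm_pow_mul_norm_lineIntegral_le hω hB measurableSet_Ioi
      fun s hs => mul_nonneg hs.le h

lemma exists_norm_pow_mul_iteratedFDeriv_lineIntegral_le (g : 𝓢(E, G)) (hω : ‖ω‖ = 1)
    (h0 : lineIntegral Set.univ g ω = 0) (N n : ℕ) :
    ∃ C, ∀ x, ‖x‖ ^ N * ‖iteratedFDeriv ℝ n (lineIntegral (Set.Iic 0) g ω) x‖ ≤ C := by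
  induction n generalizing G with
  | zero =>
    obtain ⟨B, hB⟩ := exists_one_add_norm_pow_mul_norm_le g (N + 2)
    refine ⟨Real.pi * B, fun x => ?_⟩
    rw [norm_iteratedFDeriv_zero]
    refine le_trans ?_ (one_add_norm_pow_mul_norm_lineIntegral_Iic_le g hω h0 hB x)
    gcongr
    linarith
  | succ n ih =>
    simp_rw [← norm_iteratedFDeriv_fderiv, fderiv_lineIntegral _ g hω]
    exact ih _ (lineIntegral_univ_fderiv_eq_zero g hω h0)

/-- The Schwartz antiderivative in the unit direction `ω` of a Schwartz function whose integrals
over all lines parallel to `ω` vanish. -/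
def lineAntideriv (g : 𝓢(E, G)) (hω : ‖ω‖ = 1) (h0 : lineIntegral Set.univ g ω = 0) : 𝓢(E, G) where
  toFun := lineIntegral (Set.Iic 0) g ω
  smooth' := contDiff_infty.2 (contDiff_lineIntegral _ g hω)
  decay' := exists_norm_pow_mul_iteratedFDeriv_lineIntegral_le g hω h0

lemma lineDeriv_lineAntideriv [CompleteSpace G] (g : 𝓢(E, G)) (hω : ‖ω‖ = 1)
    (h0 : lineIntegral Set.univ g ω = 0) : ∂_{ω} (lineAntideriv g hω h0) = g := by
  ext x
  have hg : Integrable fun s : ℝ => g (x + s • ω) := integrable_line g hω x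
  have hg' : Integrable fun s : ℝ => ∂_{ω} g (x + s • ω) := integrable_line _ hω x
  calc ∂_{ω} (lineAntideriv g hω h0) x
      = fderiv ℝ (lineIntegral (Set.Iic 0) g ω) x ω := SchwartzMap.lineDerivOp_apply_eq_fderiv ..
    _ = ∫ s in Set.Iic (0 : ℝ), ∂_{ω} g (x + s • ω) := by
        rw [fderiv_lineIntegral _ g hω, lineIntegral,
          ContinuousLinearMap.integral_apply (integrable_line _ hω x).restrict]
        simp [SchwartzMap.lineDerivOp_apply_eq_fderiv]
    _ = g (x + (0 : ℝ) • ω) - 0 :=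
        integral_Iic_of_hasDerivAt_of_tendsto' (fun s _ => hasDerivAt_line g ω x s)
          hg'.integrableOn
          (tendsto_zero_of_hasDerivAt_of_integrableOn_Iic (a := 0)
            (fun s _ => hasDerivAt_line g ω x s) hg'.integrableOn hg.integrableOn)
    _ = g x := by simp

end LineIntegral

section Moments

universe u v

variable {F : Type v} [NormedAddCommGroup F] [NormedSpace ℝ F]

lemma integrable_pow_smul (ψ : 𝓢(ℝ, F)) (l : ℕ) : Integrable fun t : ℝ => t ^ l • ψ t :=
  (ψ.integrable_pow_mul volume l).mono (by fun_prop : Continuous _).aestronglyMeasurable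
    (.of_forall fun t => by simp [norm_smul])

lemma integral_pow_succ_smul_deriv [CompleteSpace F] {ψ ψ' : 𝓢(ℝ, F)}
    (h : ∀ t, HasDerivAt ψ (ψ' t) t) (l : ℕ) :
    ∫ t : ℝ, t ^ (l + 1) • ψ' t = -((l + 1 : ℝ) • ∫ t : ℝ, t ^ l • ψ t) := by
  have hderiv (t : ℝ) : HasDerivAt (fun t => t ^ (l + 1) • ψ t)
      (t ^ (l + 1) • ψ' t + (l + 1 : ℝ) • t ^ l • ψ t) t := by
    refine ((hasDerivAt_pow (l + 1) t).smul (h t)).congr_deriv ?_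
    simp [smul_smul]
  have hψ : Integrable fun t : ℝ => (l + 1 : ℝ) • t ^ l • ψ t :=
    (integrable_pow_smul ψ l).smul (l + 1 : ℝ)
  have hψ' := integrable_pow_smul ψ' (l + 1)
  have h0 := integral_eq_zero_of_hasDerivAt_of_integrable hderiv (hψ'.add hψ)
    (integrable_pow_smul ψ (l + 1))
  rw [integral_add hψ' hψ, integral_smul] at h0
  exact eq_neg_of_add_eq_zero_left h0

section Line

variable {E : Type u} [NormedAddCommGroup E] [InnerProductSpace ℝ E] {ω : E}

lemma antilipschitzWith_line (hω : ‖ω‖ = 1) (x : E) :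
    AntilipschitzWith 1 (fun s : ℝ => x + s • ω) :=
  .of_le_mul_dist fun s t => by simp [dist_eq_norm, ← sub_smul, norm_smul, hω]

/-- The restriction `s ↦ g (x + s • ω)` of a Schwartz function to a line. -/
def restrictLine (g : 𝓢(E, F)) (hω : ‖ω‖ = 1) (x : E) : 𝓢(ℝ, F) :=
  SchwartzMap.compCLMOfAntilipschitz ℝ (by fun_prop) (antilipschitzWith_line hω x) g

lemma restrictLine_apply (g : 𝓢(E, F)) (hω : ‖ω‖ = 1) (x : E) (s : ℝ) :
    restrictLine g hω x s = g (x + s • ω) := rfl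

/-- The moments of order `< c` of `g` vanish along every line of direction `ω`. -/
def HasVanishingMoments (c : ℕ) (g : E → F) (ω : E) : Prop :=
  ∀ l < c, ∀ x, ∫ t : ℝ, t ^ l • g (x + t • ω) = 0

lemma HasVanishingMoments.of_inner_eq_zero {c : ℕ} (g : 𝓢(E, F)) (hω : ‖ω‖ = 1)
    (h : ∀ l < c, ∀ x, ⟪x, ω⟫ = 0 → ∫ t : ℝ, t ^ l • g (x + t • ω) = 0) :
    HasVanishingMoments c g ω := by
  intro l hl x
  set a := ⟪x, ω⟫ with ha
  have hx₀ : ⟪x - a • ω, ω⟫ = 0 := by simp [inner_sub_left, inner_smul_left, hω, ← ha]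
  have hint (j : ℕ) : Integrable fun t : ℝ => t ^ j • g (x - a • ω + t • ω) :=
    integrable_pow_smul (restrictLine g hω (x - a • ω)) j
  calc ∫ t : ℝ, t ^ l • g (x + t • ω)
      = ∫ t : ℝ, (t - a) ^ l • g (x - a • ω + t • ω) := by
        rw [← integral_sub_right_eq_self (fun t : ℝ => t ^ l • g (x + t • ω)) a]
        simp only [sub_smul, sub_add_eq_add_sub, add_sub_assoc]
    _ = ∫ t : ℝ, ∑ j ∈ Finset.range (l + 1),
          ((-a) ^ (l - j) * l.choose j) • t ^ j • g (x - a • ω + t • ω) := by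
        simp_rw [sub_eq_add_neg _ a, add_pow, Finset.sum_smul, smul_smul]
        congr! 4
        ring
    _ = 0 := by
        refine (integral_finsetSum _ fun j _ => (hint j).smul _).trans
          (Finset.sum_eq_zero fun j hj => ?_)
        simp only [Pi.smul_apply]
        rw [integral_smul, h j (by have := Finset.mem_range.1 hj; omega) _ hx₀, smul_zero]

variable {c : ℕ}

lemma HasVanishingMoments.lineIntegral_univ_eq_zero {g : E → F}
    (h : HasVanishingMoments (c + 1) g ω) : lineIntegral Set.univ g ω = 0 :=
  funext fun x => by simpa [lineIntegral] using h 0 c.succ_pos x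

variable {G : Type u} [NormedAddCommGroup G] [NormedSpace ℝ G] [CompleteSpace G]

lemma HasVanishingMoments.lineAntideriv {g : 𝓢(E, G)} (hω : ‖ω‖ = 1)
    (h : HasVanishingMoments (c + 1) g ω) :
    HasVanishingMoments c (lineAntideriv g hω h.lineIntegral_univ_eq_zero) ω := by
  intro l hl x
  set V := _root_.lineAntideriv g hω h.lineIntegral_univ_eq_zero
  have hderiv (t : ℝ) : HasDerivAt (restrictLine V hω x) (restrictLine g hω x t) t := by
    have := hasDerivAt_line V ω x t
    rwa [lineDeriv_lineAntideriv] at this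
  have hparts := integral_pow_succ_smul_deriv hderiv l
  simp_rw [restrictLine_apply] at hparts
  rw [h (l + 1) (by omega) x, eq_comm, neg_eq_zero, smul_eq_zero] at hparts
  exact hparts.resolve_left (by positivity)

lemma HasVanishingMoments.exists_iteratedLineDeriv_eq {g : 𝓢(E, G)} (hω : ‖ω‖ = 1)
    (h : HasVanishingMoments c g ω) {N : ℕ} {B : ℝ}
    (hB : ∀ x, (1 + ‖x‖) ^ (N + 2 * c) * ‖g x‖ ≤ B) :
    ∃ V : 𝓢(E, G), ∂^{fun _ : Fin c => ω} V = g ∧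
      ∀ x, (1 + ‖x‖) ^ N * ‖V x‖ ≤ Real.pi ^ c * B := by
  induction c generalizing g B with
  | zero => exact ⟨g, rfl, by simpa using hB⟩
  | succ c ih =>
    obtain ⟨V, hV, hVB⟩ := ih (h.lineAntideriv hω)
      (one_add_norm_pow_mul_norm_lineIntegral_Iic_le g hω h.lineIntegral_univ_eq_zero hB)
    refine ⟨V, ?_, fun x => (hVB x).trans_eq (by ring)⟩
    calc ∂^{fun _ : Fin (c + 1) => ω} V = ∂_{ω} (∂^{fun _ : Fin c => ω} V) := rfl
      _ = g := by rw [hV, lineDeriv_lineAntideriv]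

end Line

section Primitive

variable {G : Type} [NormedAddCommGroup G] [NormedSpace ℝ G] [CompleteSpace G]

lemma exists_schwartzMap_eq_of_hasDerivAt {ψ : 𝓢(ℝ, G)} {u : ℝ → G}
    (hu : ∀ t, HasDerivAt u (ψ t) t) (hlim : Tendsto u (cocompact ℝ) (𝓝 0)) :
    ∃ Ψ : 𝓢(ℝ, G), ⇑Ψ = u := by
  have hint : ∫ t, ψ t = 0 := by
    simpa using integral_of_hasDerivAt_of_tendsto hu ψ.integrable
      (hlim.mono_left atBot_le_cocompact) (hlim.mono_left atTop_le_cocompact)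
  have h0 : lineIntegral Set.univ ψ (1 : ℝ) = 0 := by
    funext x
    simpa [lineIntegral, hint] using integral_add_left_eq_self (μ := volume) ψ x
  set Ψ := lineAntideriv ψ norm_one h0
  have hΨ (t : ℝ) : HasDerivAt Ψ (ψ t) t := by
    simpa [Ψ, lineDeriv_lineAntideriv] using hasDerivAt_line Ψ 1 0 t
  have hconst (t : ℝ) : u t - Ψ t = u 0 - Ψ 0 :=
    is_const_of_deriv_eq_zero (fun s => ((hu s).sub (hΨ s)).differentiableAt)
      (fun s => by simpa using ((hu s).sub (hΨ s)).deriv) t 0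
  have hzero : u 0 - Ψ 0 = 0 := by
    have hlim' := (hlim.sub Ψ.tendsto_cocompact).mono_left atTop_le_cocompact
    simp_rw [hconst, sub_zero] at hlim'
    exact tendsto_nhds_unique tendsto_const_nhds hlim'
  exact ⟨Ψ, funext fun t => (sub_eq_zero.1 ((hconst t).trans hzero)).symm⟩

lemma integral_pow_smul_eq_zero_of_hasDerivAt {k : ℕ} {φ : ℕ → ℝ → G} {ψ : 𝓢(ℝ, G)}
    (hφ : ∀ l ≤ k, ∀ t, HasDerivAt (φ l) (φ (l + 1) t) t)
    (hlim : ∀ l ≤ k, Tendsto (φ l) (cocompact ℝ) (𝓝 0)) (hψ : ⇑ψ = φ (k + 1))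
    {q : ℕ} (hq : q ≤ k) : ∫ t : ℝ, t ^ q • ψ t = 0 := by
  obtain ⟨Ψ, hΨ⟩ : ∃ Ψ : 𝓢(ℝ, G), ⇑Ψ = φ k :=
    exists_schwartzMap_eq_of_hasDerivAt (hψ ▸ hφ k le_rfl) (hlim k le_rfl)
  have hderiv (t : ℝ) : HasDerivAt Ψ (ψ t) t := by simpa [hΨ, hψ] using hφ k le_rfl t
  cases q with
  | zero =>
    simpa using integral_eq_zero_of_hasDerivAt_of_integrable hderiv ψ.integrable Ψ.integrable
  | succ q =>
    obtain ⟨k, rfl⟩ : ∃ j, k = j + 1 := ⟨k - 1, by omega⟩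
    rw [integral_pow_succ_smul_deriv hderiv,
      integral_pow_smul_eq_zero_of_hasDerivAt (fun l hl => hφ l (by omega))
        (fun l hl => hlim l (by omega)) hΨ (by omega : q ≤ k), smul_zero, neg_zero]

end Primitive

end Moments

section Multilinear

variable {R M N : Type*} [CommRing R] [AddCommGroup M] [Module R M] [AddCommGroup N] [Module R N]

-- The `Option`-valued choices `r` in the multilinear expansion pick `x₀` or some `v s`; the
-- alternating sum over `T` kills those missing some `v s`, and the others are permutations.
lemma sum_neg_one_pow_smul_map_diag {ι : Type*} [Fintype ι] [DecidableEq ι]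
    (f : MultilinearMap R (fun _ : ι => M) N) (x₀ : M) (v : ι → M) :
    ∑ T : Finset ι, (-1 : ℤ) ^ T.card • f (fun _ => x₀ + ∑ s ∈ Tᶜ, v s) =
      ∑ π : Equiv.Perm ι, f (v ∘ π) := by
  let c : Option ι → M := fun o => o.elim x₀ v
  let missed (r : ι → Option ι) : Finset ι := {s | ∀ i, r i ≠ some s}
  have hexpand (T : Finset ι) : f (fun _ => x₀ + ∑ s ∈ Tᶜ, v s) =
      ∑ r ∈ Fintype.piFinset fun _ => Finset.insertNone Tᶜ, f (c ∘ r) := by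
    have h := f.map_sum_finset (fun _ => c) fun _ => Finset.insertNone Tᶜ
    simp only [Finset.sum_insertNone] at h
    exact h
  have hmem (T : Finset ι) (r : ι → Option ι) :
      r ∈ Fintype.piFinset (fun _ => Finset.insertNone Tᶜ) ↔ T ∈ (missed r).powerset := by
    simp only [Fintype.mem_piFinset, Finset.mem_insertNone, Finset.mem_compl, Finset.mem_powerset,
      Finset.subset_iff, missed, Finset.mem_filter_univ, Option.mem_def]
    exact ⟨fun h s hs i hi => h i s hi hs, fun h i s hi hs => h hs i hi⟩
  calc ∑ T : Finset ι, (-1 : ℤ) ^ T.card • f (fun _ => x₀ + ∑ s ∈ Tᶜ, v s)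
      = ∑ r : ι → Option ι, ∑ T ∈ (missed r).powerset, (-1 : ℤ) ^ T.card • f (c ∘ r) := by
        simp_rw [hexpand, Finset.smul_sum]
        exact Finset.sum_comm' fun T r => by simp [hmem]
    _ = ∑ r : ι → Option ι with missed r = ∅, f (c ∘ r) := by
        simp_rw [← Finset.sum_smul, Finset.sum_powerset_neg_one_pow_card, ite_smul, one_smul,
          zero_smul, Finset.sum_filter]
    _ = ∑ π : Equiv.Perm ι, f (v ∘ π) := by
        symm
        refine Finset.sum_nbij (fun π i => some (π i)) ?_ ?_ ?_ fun π _ => rfl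
        · intro π _
          simpa [missed, Finset.filter_eq_empty_iff] using fun s => π.surjective s
        · exact fun π _ τ _ h => Equiv.ext fun i => Option.some.inj (congrFun h i)
        · intro r hr
          have hr' : ∀ s, ∃ i, r i = some s := by
            simpa [missed, Finset.filter_eq_empty_iff] using hr
          choose g hg using hr'
          have hinj : g.Injective := fun s t h => Option.some.inj (by rw [← hg s, ← hg t, h])
          let π := Equiv.ofBijective g (Finite.injective_iff_bijective.1 hinj)
          refine ⟨π.symm, by simp, funext fun i => ?_⟩
          exact (hg (π.symm i)).symm.trans (congrArg r (π.apply_symm_apply i))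

variable {m : ℕ}

lemma exists_diag_eq_smul_of_ker {ℓ : M →ₗ[R] R} {u : M} (hu : ℓ u = 1)
    (f : MultilinearMap R (fun _ : Fin (m + 1) => M) N)
    (hf : ∀ ξ, ℓ ξ = 0 → f (fun _ => ξ) = 0) :
    ∃ G : MultilinearMap R (fun _ : Fin m => M) N, ∀ ξ, f (fun _ => ξ) = ℓ ξ • G (fun _ => ξ) := by
  let P : M →ₗ[R] M := LinearMap.id - ℓ.smulRight u
  have hP (ξ : M) : P ξ = ξ - ℓ ξ • u := rfl
  refine ⟨∑ i, (f.curryMid i u).compLinearMap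
    fun j => if i.succAbove j < i then LinearMap.id else P, fun ξ => ?_⟩
  have hker : f (fun _ => P ξ) = 0 := hf _ (by simp [hP, hu])
  have htele := f.map_sub_map_piecewise (fun _ => ξ) (fun _ => P ξ) Finset.univ
  rw [Finset.piecewise_univ, hker, sub_zero] at htele
  rw [htele, sum_apply, Finset.smul_sum]
  refine Finset.sum_congr rfl fun i _ => ?_
  have hξ : ξ - P ξ = ℓ ξ • u := sub_sub_cancel ξ _
  calc f (fun j => if j ∈ Finset.univ → j < i then ξ else if i = j then ξ - P ξ else P ξ)
      = f.curryMid i (ℓ ξ • u) fun j => if i.succAbove j < i then ξ else P ξ := by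
        rw [MultilinearMap.curryMid_apply_apply]
        congr 1
        ext j
        cases j using i.succAboveCases <;> simp [hξ, (Fin.succAbove_ne i _).symm]
    _ = ℓ ξ • f.curryMid i u fun j => if i.succAbove j < i then ξ else P ξ := by
        rw [map_smul, smul_apply]
    _ = ℓ ξ • (f.curryMid i u).compLinearMap
          (fun j => if i.succAbove j < i then LinearMap.id else P) fun _ => ξ := by
        rw [MultilinearMap.compLinearMap_apply]
        congr! 3 with j
        split_ifs <;> rfl

end Multilinear

section Division

variable {M N : Type*} [AddCommGroup M] [Module ℝ M] [NormedAddCommGroup N] [NormedSpace ℝ N]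

lemma continuous_diag_line {ι : Type*} [Finite ι] (f : MultilinearMap ℝ (fun _ : ι => M) N)
    (ξ u : M) : Continuous fun t : ℝ => f fun _ => ξ + t • u := by
  classical
  cases nonempty_fintype ι
  have (t : ℝ) : (f fun _ => ξ + t • u) =
      ∑ s : Finset ι, t ^ s.card • f (s.piecewise (fun _ => u) fun _ => ξ) := by
    rw [add_comm ξ, ← Pi.add_def, f.map_add_univ]
    refine Finset.sum_congr rfl fun s _ => ?_
    have h := f.map_piecewise_smul (fun _ => t) (s.piecewise (fun _ => u) fun _ => ξ) s
    rw [Finset.prod_const] at h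
    rw [← h]
    congr 1
    ext i
    by_cases hi : i ∈ s <;> simp [hi]
  simp_rw [this]
  fun_prop

lemma exists_diag_eq_pow_smul {p c : ℕ} {ℓ : M →ₗ[ℝ] ℝ} {u : M} (hu : ℓ u = 1)
    (f : MultilinearMap ℝ (fun _ : Fin (p + c) => M) N)
    (hf : ∀ ξ, ℓ ξ = 0 → (fun t : ℝ => f fun _ => ξ + t • u) =O[𝓝[≠] 0] fun t => t ^ c) :
    ∃ G : MultilinearMap ℝ (fun _ : Fin p => M) N,
      ∀ ξ, f (fun _ => ξ) = ℓ ξ ^ c • G fun _ => ξ := by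
  induction c with
  | zero => exact ⟨f, fun ξ => by simp⟩
  | succ c ih =>
    have hker (ξ : M) (hξ : ℓ ξ = 0) : f (fun _ => ξ) = 0 := by
      have hcont : Tendsto (fun t : ℝ => f fun _ => ξ + t • u) (𝓝[≠] 0) (𝓝 (f fun _ => ξ)) := by
        simpa using ((continuous_diag_line f ξ u).tendsto 0).mono_left nhdsWithin_le_nhds
      have hpow : Tendsto (fun t : ℝ => t ^ (c + 1)) (𝓝[≠] 0) (𝓝 0) := by
        simpa using ((continuous_pow (c + 1)).tendsto (0 : ℝ)).mono_left nhdsWithin_le_nhds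
      exact tendsto_nhds_unique hcont ((hf ξ hξ).trans_tendsto hpow)
    obtain ⟨G, hG⟩ := exists_diag_eq_smul_of_ker (m := p + c) hu f hker
    obtain ⟨H, hH⟩ := ih G fun ξ hξ => by
      refine ((Asymptotics.isBigO_refl (fun t : ℝ => t⁻¹) _).smul (hf ξ hξ)).congr' ?_ ?_
      · filter_upwards [self_mem_nhdsWithin] with t ht
        rw [show f (fun _ => ξ + t • u) = _ from hG _]
        simp [hu, hξ, inv_smul_smul₀ ht]
      · filter_upwards [self_mem_nhdsWithin] with t ht
        rw [smul_eq_mul, pow_succ', inv_mul_cancel_left₀ ht]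
    exact ⟨H, fun ξ => by rw [pow_succ', mul_smul, ← hH]; exact hG ξ⟩

end Division

section Tensors

variable {n p : ℕ} {A B : Type*} [AddCommGroup A] [Module ℝ A] [AddCommGroup B] [Module ℝ B]

/-- The pairing `⟨T, ξ^p⟩ = T_{i₁…i_p} ξ^{i₁} ⋯ ξ^{i_p}` of a tensor with the `p`-th power of a
vector. -/
def evalPow (T : (Fin p → Fin n) → A) (ξ : En n) : A :=
  ∑ i, (∏ r, ξ (i r)) • T i

/-- The multilinear map with components `T`. -/
def tensorMultilinear (T : (Fin p → Fin n) → A) : MultilinearMap ℝ (fun _ : Fin p => En n) A :=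
  ∑ i, ((MultilinearMap.mkPiAlgebra ℝ (Fin p) ℝ).compLinearMap fun r =>
    (EuclideanSpace.proj (i r) : En n →L[ℝ] ℝ).toLinearMap).smulRight (T i)

/-- The components of a multilinear map in the standard basis. -/
def components (G : MultilinearMap ℝ (fun _ : Fin p => En n) A) (i : Fin p → Fin n) : A :=
  G fun r => EuclideanSpace.single (i r) 1

lemma tensorMultilinear_diag (T : (Fin p → Fin n) → A) (ξ : En n) :
    tensorMultilinear T (fun _ => ξ) = evalPow T ξ := by
  simp [tensorMultilinear, evalPow]

lemma components_tensorMultilinear (T : (Fin p → Fin n) → A) :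
    components (tensorMultilinear T) = T := by
  have delta (i j : Fin p → Fin n) :
      ∏ r, (if j r = i r then (1 : ℝ) else 0) = if j = i then 1 else 0 := by
    simp [Finset.prod_ite_zero, funext_iff]
  funext i
  simp [components, tensorMultilinear, delta]

lemma evalPow_components (G : MultilinearMap ℝ (fun _ : Fin p => En n) A) (ξ : En n) :
    evalPow (components G) ξ = G fun _ => ξ := by
  have hξ : ξ = ∑ j, ξ j • EuclideanSpace.single j (1 : ℝ) := by
    ext l
    simp [Pi.single_apply]
  conv_rhs => rw [hξ, G.map_sum]
  simp [evalPow, components, G.map_smul_univ]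

lemma map_evalPow (L : A →ₗ[ℝ] B) (T : (Fin p → Fin n) → A) (ξ : En n) :
    L (evalPow T ξ) = evalPow (fun i => L (T i)) ξ := by
  simp [evalPow]

lemma evalPow_smul (T : (Fin p → Fin n) → A) (c : ℝ) (ξ : En n) :
    evalPow T (c • ξ) = c ^ p • evalPow T ξ := by
  simp [evalPow, Finset.prod_mul_distrib, Finset.smul_sum, smul_smul]

lemma norm_evalPow_le {A : Type*} [NormedAddCommGroup A] [NormedSpace ℝ A]
    (T : (Fin p → Fin n) → A) (ξ : En n) : ‖evalPow T ξ‖ ≤ ‖ξ‖ ^ p * ∑ i, ‖T i‖ := by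
  rw [Finset.mul_sum]
  refine norm_sum_le_of_le _ fun i _ => ?_
  rw [norm_smul, norm_prod]
  gcongr
  calc ∏ r, ‖ξ (i r)‖ ≤ ∏ _r : Fin p, ‖ξ‖ := by gcongr; exact PiLp.norm_apply_le ξ _
    _ = ‖ξ‖ ^ p := by simp

lemma symz_comp_perm (T : (Fin p → Fin n) → A) (π : Equiv.Perm (Fin p)) (i : Fin p → Fin n) :
    symz T (i ∘ π) = symz T i :=
  congrArg ((p.factorial : ℝ)⁻¹ • ·) (Fintype.sum_equiv (Equiv.mulLeft π) _ _ fun _ => rfl)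

lemma inv_factorial_smul_sum_perm (a : A) :
    (p.factorial : ℝ)⁻¹ • ∑ _π : Equiv.Perm (Fin p), a = a := by
  rw [Finset.sum_const, Finset.card_univ, Fintype.card_perm, Fintype.card_fin,
    ← Nat.cast_smul_eq_nsmul ℝ, inv_smul_smul₀ (by positivity)]

lemma symz_eq_self {T : (Fin p → Fin n) → A}
    (h : ∀ (π : Equiv.Perm (Fin p)) i, T (i ∘ π) = T i) : symz T = T := by
  funext i
  simp only [symz, h, inv_factorial_smul_sum_perm]

lemma evalPow_comp_perm (T : (Fin p → Fin n) → A) (π : Equiv.Perm (Fin p)) (ξ : En n) :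
    evalPow (fun i => T (i ∘ π)) ξ = evalPow T ξ := by
  refine Fintype.sum_equiv (π.symm.arrowCongr (Equiv.refl _)) _ _ fun i => ?_
  congr 1
  exact (Equiv.prod_comp π fun r => ξ (i r)).symm

lemma evalPow_symz (T : (Fin p → Fin n) → A) (ξ : En n) : evalPow (symz T) ξ = evalPow T ξ :=
  calc evalPow (symz T) ξ
      = (p.factorial : ℝ)⁻¹ • ∑ π : Equiv.Perm (Fin p), evalPow (fun i => T (i ∘ π)) ξ := by
        simp only [evalPow, symz, Finset.smul_sum, smul_comm (_ : ℝ) (p.factorial : ℝ)⁻¹]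
        exact Finset.sum_comm
    _ = evalPow T ξ := by simp_rw [evalPow_comp_perm, inv_factorial_smul_sum_perm]

/-- The vectors at which the polarization formula for the component `i` evaluates a polynomial map.
The offset `(1, …, 1)` makes them nonzero. -/
def polarNode (i : Fin p → Fin n) (T : Finset (Fin p)) : En n :=
  WithLp.toLp 2 1 + ∑ s ∈ Tᶜ, EuclideanSpace.single (i s) 1

lemma polarNode_ne_zero [NeZero n] (i : Fin p → Fin n) (T : Finset (Fin p)) :
    polarNode i T ≠ 0 := by
  have h : 0 < polarNode i T 0 := by
    simp only [polarNode, PiLp.add_apply, WithLp.ofLp_sum, Finset.sum_apply, PiLp.single_apply,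
      Pi.one_apply]
    positivity
  exact fun h0 => h.ne' (by rw [h0, PiLp.zero_apply])

/-- The tensor that the polarization formula assigns to a map `F`; it recovers the symmetric tensor
`T` from `F = evalPow T`. -/
def polarize (F : En n → A) (i : Fin p → Fin n) : A :=
  (p.factorial : ℝ)⁻¹ • ∑ T : Finset (Fin p), (-1 : ℤ) ^ T.card • F (polarNode i T)

lemma map_polarize (L : A →ₗ[ℝ] B) (F : En n → A) (i : Fin p → Fin n) :
    L (polarize F i) = polarize (fun ξ => L (F ξ)) i := by
  simp [polarize]

lemma polarize_diag (G : MultilinearMap ℝ (fun _ : Fin p => En n) A) :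
    polarize (fun ξ => G fun _ => ξ) = symz (components G) :=
  funext fun _ => congrArg _ (sum_neg_one_pow_smul_map_diag G _ _)

lemma polarize_evalPow (T : (Fin p → Fin n) → A) : polarize (evalPow T) = symz T := by
  simp_rw [← funext (tensorMultilinear_diag T), polarize_diag, components_tensorMultilinear]

lemma evalPow_polarize_evalPow (T : (Fin p → Fin n) → A) (ξ : En n) :
    evalPow (polarize (p := p) (evalPow T)) ξ = evalPow T ξ := by
  rw [polarize_evalPow, evalPow_symz]

lemma eq_of_evalPow_eq {T U : (Fin p → Fin n) → A}
    (hT : ∀ (π : Equiv.Perm (Fin p)) i, T (i ∘ π) = T i)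
    (hU : ∀ (π : Equiv.Perm (Fin p)) i, U (i ∘ π) = U i)
    (h : ∀ ξ, evalPow T ξ = evalPow U ξ) : T = U := by
  rw [← symz_eq_self hT, ← symz_eq_self hU, ← polarize_evalPow, ← polarize_evalPow, funext h]

end Tensors

section Fourier

lemma postcompCLM_lineDeriv {V F G : Type*} [NormedAddCommGroup V] [NormedSpace ℝ V]
    [NormedAddCommGroup F] [NormedSpace ℝ F] [NormedAddCommGroup G]
    [NormedSpace ℝ G] (L : F →L[ℝ] G) (m : V) (S : 𝓢(V, F)) :
    SchwartzMap.postcompCLM L (∂_{m} S) = ∂_{m} (SchwartzMap.postcompCLM L S) := by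
  ext x
  have h : HasFDerivAt (SchwartzMap.postcompCLM L S) (L.comp (fderiv ℝ S x)) x :=
    L.hasFDerivAt.comp x S.differentiableAt.hasFDerivAt
  simp [SchwartzMap.lineDerivOp_apply_eq_fderiv, h.fderiv]

variable {V : Type*} [NormedAddCommGroup V] [InnerProductSpace ℝ V] [FiniteDimensional ℝ V]
  [MeasurableSpace V] [BorelSpace V]

/-- The value at `y` of the Fourier transform of a real Schwartz function, as a linear functional of
the function. -/
def fourierAt (y : V) : 𝓢(V, ℝ) →ₗ[ℝ] ℂ where
  toFun S := 𝓕 (SchwartzMap.postcompCLM Complex.ofRealCLM S) y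
  map_add' S T := by rw [map_add, FourierTransform.fourier_add]; rfl
  map_smul' c S := by rw [map_smul, FourierTransform.fourier_smul]; rfl

lemma fourierAt_lineDeriv (y m : V) (S : 𝓢(V, ℝ)) :
    fourierAt y (∂_{m} S) = (2 * Real.pi * Complex.I * ⟪y, m⟫) * fourierAt y S := by
  have hm : (fun x : V => ⟪x, m⟫).HasTemperateGrowth := by fun_prop
  simp only [fourierAt, LinearMap.coe_mk, AddHom.coe_mk]
  rw [postcompCLM_lineDeriv, SchwartzMap.fourier_lineDerivOp_eq, smul_apply,
    SchwartzMap.smulLeftCLM_apply_apply hm]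
  simp only [smul_eq_mul, Complex.real_smul]
  ring

lemma fourierAt_iteratedLineDeriv (y m : V) (c : ℕ) (S : 𝓢(V, ℝ)) :
    fourierAt y (∂^{fun _ : Fin c => m} S) =
      (2 * Real.pi * Complex.I * ⟪y, m⟫) ^ c * fourierAt y S := by
  rw [LineDeriv.iteratedLineDerivOp_const_eq_iter_lineDerivOp]
  induction c with
  | zero => simp
  | succ c ih => rw [Function.iterate_succ_apply', fourierAt_lineDeriv, ih]; ring

lemma norm_fourierAt_le (y : V) (S : 𝓢(V, ℝ)) : ‖fourierAt y S‖ ≤ ∫ x, ‖S x‖ := by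
  simp only [fourierAt, LinearMap.coe_mk, AddHom.coe_mk, SchwartzMap.fourier_coe, Real.fourier_eq]
  exact (norm_integral_le_integral_norm _).trans_eq (by simp)

lemma continuous_fourierAt (S : 𝓢(V, ℝ)) : Continuous fun y => fourierAt y S :=
  (𝓕 (SchwartzMap.postcompCLM Complex.ofRealCLM S)).continuous

lemma eq_of_fourierAt_eq {S T : 𝓢(V, ℝ)} (h : ∀ y, fourierAt y S = fourierAt y T) : S = T := by
  have hST : SchwartzMap.postcompCLM Complex.ofRealCLM S =
      SchwartzMap.postcompCLM Complex.ofRealCLM T := by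
    rw [← FourierTransform.fourierInv_fourier_eq (F := 𝓢(V, ℂ)) (SchwartzMap.postcompCLM _ S),
      ← FourierTransform.fourierInv_fourier_eq (F := 𝓢(V, ℂ)) (SchwartzMap.postcompCLM _ T)]
    exact congrArg 𝓕⁻ (SchwartzMap.ext h)
  ext x
  exact Complex.ofReal_injective (DFunLike.congr_fun hST x)

lemma eq_of_fourierAt_ae_eq {S T : 𝓢(V, ℝ)}
    (h : ∀ᵐ y : V, fourierAt y S = fourierAt y T) : S = T :=
  eq_of_fourierAt_eq <| congrFun <|
    ((continuous_fourierAt S).ae_eq_iff_eq volume (continuous_fourierAt T)).1 h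

lemma ae_inner_ne_zero {v : V} (hv : v ≠ 0) : ∀ᵐ y : V, ⟪y, v⟫ ≠ 0 := by
  have hker : LinearMap.ker (innerₛₗ ℝ v) ≠ ⊤ := fun h =>
    hv (inner_self_eq_zero.1 (LinearMap.congr_fun (LinearMap.ker_eq_top.1 h) v))
  filter_upwards [measure_eq_zero_iff_ae_notMem.1 (Measure.addHaar_submodule volume _ hker)]
    with y hy hyv
  exact hy (by simpa [real_inner_comm] using hyv)

end Fourier

section InnerDerivative

variable {n m : ℕ}

lemma evalPow_eq_sum_snoc {A : Type*} [AddCommGroup A] [Module ℝ A]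
    (T : (Fin (m + 1) → Fin n) → A) (ξ : En n) :
    evalPow T ξ = evalPow (fun i => ∑ j, ξ j • T (Fin.snoc i j)) ξ := by
  simp only [evalPow]
  rw [← (Fin.snocEquiv fun _ : Fin (m + 1) => Fin n).sum_comp, Fintype.sum_prod_type_right]
  simp [Fin.snocEquiv, Fin.prod_univ_castSucc, Finset.smul_sum, smul_smul]

lemma dsym_apply (u : (Fin m → Fin n) → En n → ℝ) (i : Fin (m + 1) → Fin n) (x : En n) :
    dsym u i x = symz (fun i : Fin (m + 1) → Fin n =>
      pd (i (Fin.last m)) (u fun s => i s.castSucc) x) i := by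
  simp [dsym, symz]

lemma sum_smul_pd (u : En n → ℝ) (x ξ : En n) : ∑ j, ξ j • pd j u x = fderiv ℝ u x ξ := by
  conv_rhs => rw [← (EuclideanSpace.basisFun (Fin n) ℝ).sum_repr ξ]
  simp [pd]

lemma hasFDerivAt_evalPow {u : (Fin m → Fin n) → En n → ℝ} {x : En n}
    (hu : ∀ i, DifferentiableAt ℝ (u i) x) (ξ : En n) :
    HasFDerivAt (fun x => evalPow (fun i => u i x) ξ) (evalPow (fun i => fderiv ℝ (u i) x) ξ) x :=
  HasFDerivAt.fun_sum fun i _ => (hu i).hasFDerivAt.fun_const_smul (∏ r, ξ (i r))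

lemma evalPow_dsym {u : (Fin m → Fin n) → En n → ℝ} {x : En n}
    (hu : ∀ i, DifferentiableAt ℝ (u i) x) (ξ : En n) :
    evalPow (fun i => dsym u i x) ξ = fderiv ℝ (fun x => evalPow (fun i => u i x) ξ) x ξ := by
  have hsymz : (fun i => dsym u i x) = symz _ := funext fun i => dsym_apply u i x
  rw [(hasFDerivAt_evalPow hu ξ).fderiv, hsymz, evalPow_symz, evalPow_eq_sum_snoc]
  simp [evalPow, ← sum_smul_pd]

lemma contDiff_dsym {u : (Fin m → Fin n) → En n → ℝ}
    (hu : ∀ i, ContDiff ℝ (⊤ : ℕ∞) (u i)) (i : Fin (m + 1) → Fin n) :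
    ContDiff ℝ (⊤ : ℕ∞) (dsym u i) := by
  have hpd (j : Fin n) (i : Fin m → Fin n) : ContDiff ℝ (⊤ : ℕ∞) (pd j (u i)) :=
    ((hu i).fderiv_right (m := (⊤ : ℕ∞)) (by simp)).clm_apply contDiff_const
  rw [funext (dsym_apply u i)]
  exact (ContDiff.sum fun π _ => hpd _ _).const_smul ((m + 1).factorial : ℝ)⁻¹

lemma contDiff_dpow {u : (Fin m → Fin n) → En n → ℝ}
    (hu : ∀ i, ContDiff ℝ (⊤ : ℕ∞) (u i)) (c : ℕ) (i : Fin (m + c) → Fin n) :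
    ContDiff ℝ (⊤ : ℕ∞) (dpow c u i) := by
  induction c with
  | zero => exact hu i
  | succ c ih => exact contDiff_dsym ih i

lemma isSymField_dsym (u : (Fin m → Fin n) → En n → ℝ) : IsSymField (dsym u) :=
  symz_comp_perm fun i : Fin (m + 1) → Fin n => pd (i (Fin.last m)) (u fun s => i s.castSucc)

lemma IsSchwartzField.dsym {u : (Fin m → Fin n) → En n → ℝ} (hu : IsSchwartzField u) :
    IsSchwartzField (dsym u) := by
  choose φ hφ using hu
  intro i
  refine ⟨symz (fun i : Fin (m + 1) → Fin n =>
    ∂_{(EuclideanSpace.single (i (Fin.last m)) 1 : En n)} (φ fun s => i s.castSucc)) i, ?_⟩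
  ext x
  simp [dsym_apply, symz, pd, ← hφ, SchwartzMap.lineDerivOp_apply_eq_fderiv]

lemma IsSchwartzField.dpow {u : (Fin m → Fin n) → En n → ℝ} (hu : IsSchwartzField u) (c : ℕ) :
    IsSchwartzField (dpow c u) := by
  induction c with
  | zero => exact hu
  | succ c ih => exact ih.dsym

lemma IsSchwartzField.contDiff {u : (Fin m → Fin n) → En n → ℝ} (hu : IsSchwartzField u)
    (i : Fin m → Fin n) : ContDiff ℝ (⊤ : ℕ∞) (u i) := by
  obtain ⟨φ, hφ⟩ := hu i
  exact hφ ▸ φ.smooth _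

lemma IsSchwartzField.tendsto_cocompact {u : (Fin m → Fin n) → En n → ℝ} (hu : IsSchwartzField u)
    (i : Fin m → Fin n) : Tendsto (u i) (cocompact (En n)) (𝓝 0) := by
  obtain ⟨φ, hφ⟩ := hu i
  exact hφ ▸ zero_at_infty φ

lemma evalPow_schwartz_apply {F : Type*} [NormedAddCommGroup F] [NormedSpace ℝ F]
    (φ : (Fin m → Fin n) → 𝓢(En n, F)) (ξ x : En n) :
    evalPow φ ξ x = evalPow (fun i => φ i x) ξ := by
  simp [evalPow]

lemma evalPow_dpow (w : (Fin m → Fin n) → 𝓢(En n, ℝ)) (c : ℕ) (x ξ : En n) :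
    evalPow (fun i => dpow c (fun j => ⇑(w j)) i x) ξ =
      (∂^{fun _ : Fin c => ξ} (evalPow w ξ)) x := by
  induction c generalizing x with
  | zero => exact (evalPow_schwartz_apply w ξ x).symm
  | succ c ih =>
    have hdiff (i) : Differentiable ℝ (dpow c (fun j => ⇑(w j)) i) :=
      (contDiff_dpow (fun j => (w j).smooth _) c i).differentiable (by simp)
    rw [LineDeriv.iteratedLineDerivOp_succ_left, SchwartzMap.lineDerivOp_apply_eq_fderiv]
    calc _ = _ := evalPow_dsym (fun i => hdiff i x) ξ
      _ = _ := by rw [funext ih]; rfl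

end InnerDerivative

lemma momRT_eq_integral_evalPow {n m : ℕ} (q : ℕ) (f : (Fin m → Fin n) → En n → ℝ) (x ξ : En n) :
    momRT q f x ξ = ∫ t : ℝ, t ^ q • evalPow (fun i => f i (x + t • ξ)) ξ := by
  simp only [momRT, evalPow, smul_eq_mul, mul_comm]

section Potential

lemma integral_norm_le_of_decay {E F : Type*} [NormedAddCommGroup E] [NormedSpace ℝ E]
    [FiniteDimensional ℝ E] [MeasurableSpace E] [BorelSpace E] [NormedAddCommGroup F]
    [NormedSpace ℝ F] (μ : Measure E) [μ.IsAddHaarMeasure] {S : 𝓢(E, F)} {B : ℝ}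
    (hB : ∀ x, (1 + ‖x‖) ^ (Module.finrank ℝ E + 1) * ‖S x‖ ≤ B) :
    ∫ x, ‖S x‖ ∂μ ≤ B * ∫ x, (1 + ‖x‖) ^ (-((Module.finrank ℝ E + 1 : ℕ) : ℝ)) ∂μ := by
  rw [← integral_const_mul]
  refine integral_mono S.integrable.norm ((integrable_one_add_norm (by simp)).const_mul B)
    fun x => ?_
  have hx : 0 < 1 + ‖x‖ := by positivity
  simp only [Real.rpow_neg hx.le, Real.rpow_natCast]
  rw [← div_eq_mul_inv, le_div_iff₀ (by positivity), mul_comm]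
  exact hB x

lemma iteratedLineDeriv_const_smul {E F : Type*} [NormedAddCommGroup E] [NormedSpace ℝ E]
    [NormedAddCommGroup F] [NormedSpace ℝ F] (c : ℕ) (r : ℝ) (m : E) (S : 𝓢(E, F)) :
    ∂^{fun _ : Fin c => r • m} S = r ^ c • ∂^{fun _ : Fin c => m} S := by
  simp only [LineDeriv.iteratedLineDerivOp_const_eq_iter_lineDerivOp]
  induction c with
  | zero => simp
  | succ c ih =>
    rw [Function.iterate_succ_apply', Function.iterate_succ_apply', ih,
      LineDeriv.lineDerivOp_left_smul, LineDeriv.lineDerivOp_smul, smul_smul, pow_succ']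

variable {n p c : ℕ}

lemma exists_unit_potential {m : ℕ} {φ : (Fin m → Fin n) → 𝓢(En n, ℝ)}
    (h : ∀ ω, ‖ω‖ = 1 → HasVanishingMoments c ⇑(evalPow φ ω) ω) :
    ∃ C, ∀ ω, ‖ω‖ = 1 → ∃ V : 𝓢(En n, ℝ),
      ∂^{fun _ : Fin c => ω} V = evalPow φ ω ∧ ∫ x, ‖V x‖ ≤ C := by
  set N := Module.finrank ℝ (En n) + 1
  choose B hB using fun i => exists_one_add_norm_pow_mul_norm_le (φ i) (N + 2 * c)
  refine ⟨Real.pi ^ c * (∑ i, B i) * ∫ x : En n, (1 + ‖x‖) ^ (-(N : ℝ)), fun ω hω => ?_⟩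
  have hdecay (x : En n) : (1 + ‖x‖) ^ (N + 2 * c) * ‖evalPow φ ω x‖ ≤ ∑ i, B i :=
    calc (1 + ‖x‖) ^ (N + 2 * c) * ‖evalPow φ ω x‖
        ≤ (1 + ‖x‖) ^ (N + 2 * c) * ∑ i, ‖φ i x‖ := by
          gcongr
          simpa [hω, evalPow_schwartz_apply] using norm_evalPow_le (fun i => φ i x) ω
      _ ≤ ∑ i, B i := by
          rw [Finset.mul_sum]
          exact Finset.sum_le_sum fun i _ => hB i x
  obtain ⟨V, hV, hVdecay⟩ := (h ω hω).exists_iteratedLineDeriv_eq hω hdecay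
  exact ⟨V, hV, integral_norm_le_of_decay volume hVdecay⟩

lemma exists_directional_potential {φ : (Fin (p + c) → Fin n) → 𝓢(En n, ℝ)}
    (h : ∀ ω, ‖ω‖ = 1 → HasVanishingMoments c ⇑(evalPow φ ω) ω) :
    ∃ (C : ℝ) (V : En n → 𝓢(En n, ℝ)), ∀ ξ ≠ 0,
      ∂^{fun _ : Fin c => ξ} (V ξ) = evalPow φ ξ ∧ ∫ x, ‖V ξ x‖ ≤ C * ‖ξ‖ ^ p := by
  obtain ⟨C, hC⟩ := exists_unit_potential h
  choose! W hW hWint using hC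
  refine ⟨C, fun ξ => ‖ξ‖ ^ p • W (‖ξ‖⁻¹ • ξ), fun ξ hξ => ?_⟩
  have hr : ‖ξ‖ ≠ 0 := norm_ne_zero_iff.2 hξ
  obtain ⟨ω, hω, hξω⟩ : ∃ ω : En n, ‖ω‖ = 1 ∧ ξ = ‖ξ‖ • ω :=
    ⟨‖ξ‖⁻¹ • ξ, by simp [norm_smul, hr], (smul_inv_smul₀ hr ξ).symm⟩
  have hinv : ‖ξ‖⁻¹ • ξ = ω := by rw [inv_smul_eq_iff₀ hr, ← hξω]
  simp only [hinv]
  constructor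
  · calc ∂^{fun _ : Fin c => ξ} (‖ξ‖ ^ p • W ω)
        = ‖ξ‖ ^ p • ‖ξ‖ ^ c • evalPow φ ω := by
          rw [LineDeriv.iteratedLineDerivOp_smul, ← hW ω hω, ← iteratedLineDeriv_const_smul,
            ← hξω]
      _ = evalPow φ ξ := by rw [smul_smul, ← pow_add, ← evalPow_smul, ← hξω]
  · calc ∫ x, ‖(‖ξ‖ ^ p • W ω) x‖ = ‖ξ‖ ^ p * ∫ x, ‖W ω x‖ := by
          simp [integral_const_mul]
      _ ≤ C * ‖ξ‖ ^ p := by rw [mul_comm]; gcongr; exact hWint ω hω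

lemma fourierAt_evalPow_line_isBigO {φ : (Fin (p + c) → Fin n) → 𝓢(En n, ℝ)} {C : ℝ}
    {V : En n → 𝓢(En n, ℝ)} (hV : ∀ ξ ≠ 0, ∂^{fun _ : Fin c => ξ} (V ξ) = evalPow φ ξ)
    (hVint : ∀ ξ ≠ 0, ∫ x, ‖V ξ x‖ ≤ C * ‖ξ‖ ^ p) {y ξ u : En n} (hξ : ⟪y, ξ⟫ = 0)
    (hu : ⟪y, u⟫ = 1) :
    (fun t : ℝ => fourierAt y (evalPow φ (ξ + t • u))) =O[𝓝[≠] 0] fun t => t ^ c := by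
  have hinner (t : ℝ) : ⟪y, ξ + t • u⟫ = t := by
    rw [inner_add_right, inner_smul_right, hξ, hu, zero_add, mul_one]
  have hne : ∀ᶠ t : ℝ in 𝓝[≠] 0, ξ + t • u ≠ 0 := by
    filter_upwards [self_mem_nhdsWithin] with t ht h0
    exact ht ((hinner t).symm.trans (by rw [h0, inner_zero_right]))
  have hquot : (fun t : ℝ => fourierAt y (V (ξ + t • u))) =O[𝓝[≠] 0] fun _ => (1 : ℝ) := by
    have hcont : Continuous fun t : ℝ => C * ‖ξ + t • u‖ ^ p := by fun_prop
    refine .trans (.of_norm_eventuallyLE ?_)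
      (((hcont.tendsto 0).mono_left nhdsWithin_le_nhds).isBigO_one ℝ)
    filter_upwards [hne] with t ht using (norm_fourierAt_le y _).trans (hVint _ ht)
  have hfactor : (fun t : ℝ => (2 * Real.pi * Complex.I * t) ^ c) =O[𝓝[≠] 0] fun t => t ^ c :=
    .pow (.of_bound (2 * Real.pi) (.of_forall fun t => by simp [abs_of_pos Real.pi_pos])) c
  refine (hfactor.mul hquot).congr' ?_ (.of_forall fun t => mul_one _)
  filter_upwards [hne] with t ht
  rw [← hV _ ht, fourierAt_iteratedLineDeriv, hinner]

lemma exists_tensor_fourierAt_eq {φ : (Fin (p + c) → Fin n) → 𝓢(En n, ℝ)} {C : ℝ}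
    {V : En n → 𝓢(En n, ℝ)} (hV : ∀ ξ ≠ 0, ∂^{fun _ : Fin c => ξ} (V ξ) = evalPow φ ξ)
    (hVint : ∀ ξ ≠ 0, ∫ x, ‖V ξ x‖ ≤ C * ‖ξ‖ ^ p) {y : En n} (hy : y ≠ 0) :
    ∃ T : (Fin p → Fin n) → ℂ, ∀ ξ, fourierAt y (evalPow φ ξ) =
      (2 * Real.pi * Complex.I * ⟪y, ξ⟫) ^ c * evalPow T ξ := by
  set z : ℂ := 2 * Real.pi * Complex.I
  have hz : z ^ c ≠ 0 := pow_ne_zero c (by simp [z])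
  have hu : innerₛₗ ℝ y ((‖y‖ ^ 2)⁻¹ • y) = 1 := by simp [hy]
  have hφ (ξ) : tensorMultilinear (fun i => fourierAt y (φ i)) (fun _ => ξ) =
      fourierAt y (evalPow φ ξ) := by
    rw [tensorMultilinear_diag, map_evalPow]
  obtain ⟨G, hG⟩ := exists_diag_eq_pow_smul hu (tensorMultilinear fun i => fourierAt y (φ i))
    fun ξ hξ => by simpa only [hφ] using fourierAt_evalPow_line_isBigO hV hVint hξ hu
  refine ⟨components ((z ^ c)⁻¹ • G), fun ξ => ?_⟩
  calc fourierAt y (evalPow φ ξ) = ⟪y, ξ⟫ ^ c • G fun _ => ξ := by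
        rw [← hφ, hG, innerₛₗ_apply_apply]
    _ = (z * ⟪y, ξ⟫) ^ c * evalPow (components ((z ^ c)⁻¹ • G)) ξ := by
        rw [evalPow_components, smul_apply, Complex.real_smul, smul_eq_mul, Complex.ofReal_pow,
          mul_pow]
        field_simp

lemma fourierAt_iteratedLineDeriv_polarize {φ : (Fin (p + c) → Fin n) → 𝓢(En n, ℝ)} {C : ℝ}
    {V : En n → 𝓢(En n, ℝ)} (hV : ∀ ξ ≠ 0, ∂^{fun _ : Fin c => ξ} (V ξ) = evalPow φ ξ)
    (hVint : ∀ ξ ≠ 0, ∫ x, ‖V ξ x‖ ≤ C * ‖ξ‖ ^ p) {y : En n} (hy : y ≠ 0)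
    (hnode : ∀ i T, ⟪y, polarNode (p := p) i T⟫ ≠ 0) (ξ : En n) :
    fourierAt y (∂^{fun _ : Fin c => ξ} (evalPow (polarize (p := p) V) ξ)) =
      fourierAt y (evalPow φ ξ) := by
  obtain ⟨T, hT⟩ := exists_tensor_fourierAt_eq hV hVint hy
  have hquot (ξ) (hξ : ⟪y, ξ⟫ ≠ 0) : fourierAt y (V ξ) = evalPow T ξ := by
    have hξ0 : ξ ≠ 0 := fun h => hξ (by rw [h, inner_zero_right])
    refine mul_left_cancel₀ (pow_ne_zero c ?_) ((fourierAt_iteratedLineDeriv y ξ c _).symm.trans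
      ((congrArg _ (hV ξ hξ0)).trans (hT ξ)))
    simpa using hξ
  have hpolar : (fun i => fourierAt y (polarize V i)) = polarize (p := p) (evalPow T) := by
    funext i
    rw [map_polarize]
    simp only [polarize, hquot _ (hnode i _)]
  rw [fourierAt_iteratedLineDeriv, map_evalPow, hpolar, evalPow_polarize_evalPow, hT]

lemma exists_schwartz_potential [NeZero n] {φ : (Fin (p + c) → Fin n) → 𝓢(En n, ℝ)}
    (h : ∀ ω, ‖ω‖ = 1 → HasVanishingMoments c ⇑(evalPow φ ω) ω) :
    ∃ w : (Fin p → Fin n) → 𝓢(En n, ℝ), (∀ (π : Equiv.Perm (Fin p)) i, w (i ∘ π) = w i) ∧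
      ∀ ξ, ∂^{fun _ : Fin c => ξ} (evalPow w ξ) = evalPow φ ξ := by
  obtain ⟨C, V, hV⟩ := exists_directional_potential h
  refine ⟨symz (polarize V), symz_comp_perm _, fun ξ => eq_of_fourierAt_ae_eq ?_⟩
  have hnode : ∀ᵐ y : En n, ∀ i T, ⟪y, polarNode (p := p) i T⟫ ≠ 0 :=
    ae_all_iff.2 fun i => ae_all_iff.2 fun T => ae_inner_ne_zero (polarNode_ne_zero i T)
  filter_upwards [hnode] with y hy
  have hy0 : y ≠ 0 := by
    rintro rfl
    exact hy 0 ∅ (inner_zero_left _)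
  rw [evalPow_symz]
  exact fourierAt_iteratedLineDeriv_polarize (fun ξ hξ => (hV ξ hξ).1) (fun ξ hξ => (hV ξ hξ).2)
    hy0 hy ξ

end Potential

section Kernel

variable {n p k : ℕ}

lemma hasVanishingMoments_evalPow {m c : ℕ} {φ : (Fin m → Fin n) → 𝓢(En n, ℝ)} {ω : En n}
    (hω : ‖ω‖ = 1) (h : ∀ l < c, ∀ x, ⟪x, ω⟫ = 0 → momRT l (fun i => ⇑(φ i)) x ω = 0) :
    HasVanishingMoments c ⇑(evalPow φ ω) ω := by
  refine .of_inner_eq_zero _ hω fun l hl x hx => ?_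
  simpa only [evalPow_schwartz_apply, momRT_eq_integral_evalPow] using h l hl x hx

theorem exists_potential_of_momRT_eq_zero [NeZero n] {f : (Fin (p + (k + 1)) → Fin n) → En n → ℝ}
    (hf : IsSchwartzField f) (hfsym : IsSymField f)
    (h : ∀ ℓ, ℓ ≤ k → ∀ x ξ : En n, ‖ξ‖ = 1 → ⟪x, ξ⟫ = 0 → momRT ℓ f x ξ = 0) :
    ∃ v : (Fin p → Fin n) → En n → ℝ,
      IsSchwartzField v ∧ IsSymField v ∧ ∀ i x, f i x = dpow (k + 1) v i x := by
  choose φ hφ using hf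
  obtain rfl : (fun i => ⇑(φ i)) = f := funext hφ
  obtain ⟨w, hwsym, hw⟩ := exists_schwartz_potential fun ω hω =>
    hasVanishingMoments_evalPow (c := k + 1) hω fun l hl x hx => h l (by omega) x ω hω hx
  refine ⟨fun j => ⇑(w j), fun j => ⟨w j, rfl⟩, fun π i => congrArg _ (hwsym π i), fun i x => ?_⟩
  have hdpow : (fun i => φ i x) = fun i => dpow (k + 1) (fun j => ⇑(w j)) i x :=
    eq_of_evalPow_eq (fun π i => congrFun (hfsym π i) x)
      (fun π i => congrFun (isSymField_dsym (dpow k fun j => ⇑(w j)) π i) x)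
      fun ξ => by rw [evalPow_dpow, hw, evalPow_schwartz_apply]
  exact congrFun hdpow i

lemma hasDerivAt_evalPow_dpow_line {v : (Fin p → Fin n) → En n → ℝ}
    (hv : ∀ j, ContDiff ℝ (⊤ : ℕ∞) (v j)) (l : ℕ) (x ξ : En n) (t : ℝ) :
    HasDerivAt (fun t : ℝ => evalPow (fun i => dpow l v i (x + t • ξ)) ξ)
      (evalPow (fun i => dpow (l + 1) v i (x + t • ξ)) ξ) t := by
  have hdiff (i) : DifferentiableAt ℝ (dpow l v i) (x + t • ξ) :=
    (contDiff_dpow hv l i).differentiable (by simp) _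
  have hline : HasDerivAt (fun s : ℝ => x + s • ξ) ξ t := by
    simpa using ((hasDerivAt_id t).smul_const ξ).const_add x
  exact ((hasFDerivAt_evalPow hdiff ξ).differentiableAt.hasFDerivAt.comp_hasDerivAt t
    hline).congr_deriv (evalPow_dsym hdiff ξ).symm

theorem momRT_eq_zero_of_eq_dpow {f : (Fin (p + (k + 1)) → Fin n) → En n → ℝ}
    (hf : IsSchwartzField f) {v : (Fin p → Fin n) → En n → ℝ}
    (hv : ∀ j, ContDiff ℝ (⊤ : ℕ∞) (v j)) (hfv : ∀ i x, f i x = dpow (k + 1) v i x)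
    (hlim : ∀ ℓ, ℓ ≤ k → ∀ i, Tendsto (dpow ℓ v i) (cocompact (En n)) (𝓝 0))
    {ℓ : ℕ} (hℓ : ℓ ≤ k) (x : En n) {ξ : En n} (hξ : ‖ξ‖ = 1) : momRT ℓ f x ξ = 0 := by
  choose φ hφ using hf
  obtain rfl : (fun i => ⇑(φ i)) = f := funext hφ
  have hline : Tendsto (fun t : ℝ => x + t • ξ) (cocompact ℝ) (cocompact (En n)) := by
    simpa only [Metric.cobounded_eq_cocompact] using
      (antilipschitzWith_line hξ x).tendsto_cobounded
  have hlim' (l) (hl : l ≤ k) : Tendsto (fun t : ℝ => evalPow (fun i => dpow l v i (x + t • ξ)) ξ)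
      (cocompact ℝ) (𝓝 0) := by
    have hsum := tendsto_finsetSum Finset.univ fun i _ =>
      ((hlim l hl i).comp hline).const_smul (∏ r, ξ (i r))
    rwa [Finset.sum_eq_zero fun i _ => smul_zero _] at hsum
  have hrestrict : ⇑(restrictLine (evalPow φ ξ) hξ x) =
      fun t : ℝ => evalPow (fun i => dpow (k + 1) v i (x + t • ξ)) ξ := by
    funext t
    simp only [restrictLine_apply, evalPow_schwartz_apply, hfv]
  have hmoment := integral_pow_smul_eq_zero_of_hasDerivAt
    (fun l _ => hasDerivAt_evalPow_dpow_line hv l x ξ) hlim' hrestrict hℓ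
  simpa only [momRT_eq_integral_evalPow, restrictLine_apply, evalPow_schwartz_apply] using hmoment

end Kernel

theorem momRT_kernel_description_general (n p k : ℕ) [NeZero n]
    (f : (Fin (p + (k + 1)) → Fin n) → En n → ℝ)
    (hf : IsSchwartzField f) (hfsym : IsSymField f) :
    (∀ ℓ, ℓ ≤ k → ∀ x ξ : En n, ‖ξ‖ = 1 → ⟪x, ξ⟫ = 0 → momRT ℓ f x ξ = 0) ↔
    (∃ v : (Fin p → Fin n) → En n → ℝ,
      (∀ j, ContDiff ℝ (⊤ : ℕ∞) (v j)) ∧ IsSymField v ∧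
      (∀ i x, f i x = dpow (k + 1) v i x) ∧
      (∀ ℓ, ℓ ≤ k → ∀ i, Tendsto (dpow ℓ v i) (cocompact (En n)) (nhds 0))) := by
  constructor
  · intro h
    obtain ⟨v, hv, hvsym, hfv⟩ := exists_potential_of_momRT_eq_zero hf hfsym h
    exact ⟨v, hv.contDiff, hvsym, hfv, fun ℓ _ => (hv.dpow ℓ).tendsto_cocompact⟩
  · rintro ⟨v, hv, -, hfv, hlim⟩ ℓ hℓ x ξ hξ -
    exact momRT_eq_zero_of_eq_dpow hf hv hfv hlim hℓ x hξ

/-- kernel description of `𝓘^k = (I^0,…,I^k)`: a Schwartz symmetric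
`m`-tensor field is in the kernel iff it is of the form `d^{k+1} v` with `v`
smooth symmetric of rank `m − k − 1` and `d^ℓ v → 0` at infinity for `0 ≤ ℓ ≤ k`.
The rank is `m = p + (k+1)` (so `k ≤ m − 1`), and `k ≤ n − 1` is expressed as
`k + 1 ≤ n`. -/
theorem momRT_kernel_description
    (n p k : ℕ) (hn : 2 ≤ n) (hk1 : 1 ≤ k) (hkn : k + 1 ≤ n)
    (f : (Fin (p + (k + 1)) → Fin n) → En n → ℝ)
    (hf : IsSchwartzField f) (hfsym : IsSymField f) :
    (∀ ℓ, ℓ ≤ k → ∀ x ξ : En n, ‖ξ‖ = 1 → ⟪x, ξ⟫ = 0 → momRT ℓ f x ξ = 0) ↔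
    (∃ v : (Fin p → Fin n) → En n → ℝ,
      (∀ j, ContDiff ℝ (⊤ : ℕ∞) (v j)) ∧ IsSymField v ∧
      (∀ i x, f i x = dpow (k + 1) v i x) ∧
      (∀ ℓ, ℓ ≤ k → ∀ i, Tendsto (dpow ℓ v i) (cocompact (En n)) (nhds 0))) := by
  have : NeZero n := ⟨by omega⟩
  exact momRT_kernel_description_general n p k f hf hfsym
end
end
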